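/- arXiv:1808.01268 — 2 statements merged into one kernel-verified Lean document; each statement's English description precedes it below -/
import Mathlib

section
/- Let c be a Coxeter element of G4 and let k ≥ 2. Two reflection factorizations (t₁,…,t_k) and (t′₁,…,t′_k) of c lie in the same Hurwitz orbit if and only if they have the same multiset of conjugacy classes. -/
noncomputable section

open Matrix Complex

/-- The `i`-th Hurwitz move on length-`k` tuples of group elements. -/
def IsHurwitzMove {G : Type*} [Group G] {k : ℕ} (t t' : Fin k → G) : Prop :=
  ∃ i : ℕ, ∃ h : i + 1 < k,
    t' ⟨i, Nat.lt_of_succ_lt h⟩ = t ⟨i + 1, h⟩ ∧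
    t' ⟨i + 1, h⟩ = (t ⟨i + 1, h⟩)⁻¹ * t ⟨i, Nat.lt_of_succ_lt h⟩ * t ⟨i + 1, h⟩ ∧
    ∀ j : Fin k, (j : ℕ) ≠ i → (j : ℕ) ≠ i + 1 → t' j = t j

/-- Two tuples lie in the same Hurwitz orbit. -/
def SameHurwitzOrbit {G : Type*} [Group G] {k : ℕ} (t t' : Fin k → G) : Prop :=
  Relation.EqvGen IsHurwitzMove t t'

/-- A group element `r` appears (as an entry) in the Hurwitz orbit of the tuple `t`. -/
def Appears {G : Type*} [Group G] {k : ℕ} (r : G) (t : Fin k → G) : Prop :=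
  ∃ s : Fin k → G, SameHurwitzOrbit t s ∧ ∃ j, s j = r

/-- A tuple has two consecutive equal entries. -/
def HasConsecutiveEqualPair {G : Type*} [Group G] {k : ℕ} (t : Fin k → G) : Prop :=
  ∃ i : ℕ, ∃ h : i + 1 < k, t ⟨i, Nat.lt_of_succ_lt h⟩ = t ⟨i + 1, h⟩

/-- Replace the `p`-th entry of a tuple by two consecutive copies of its square. -/
def doubleAt {G : Type*} [Group G] {m : ℕ} (t : Fin m → G) (p : Fin m) : Fin (m + 1) → G :=
  fun j =>
    if h1 : (j : ℕ) < (p : ℕ) then t ⟨j, h1.trans p.isLt⟩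
    else if h2 : (j : ℕ) ≤ (p : ℕ) + 1 then (t p) ^ 2
    else t ⟨(j : ℕ) - 1, by have := j.isLt; omega⟩

/-- `ω = e^(2πi/3)`. -/
def ω : ℂ := Complex.exp (2 * Real.pi * Complex.I / 3)

def AMat : Matrix (Fin 2) (Fin 2) ℂ := !![1, 0; 0, ω]

def BMat : Matrix (Fin 2) (Fin 2) ℂ :=
  !![(ω - ω ^ 2) / 3, ω ^ 2; (-2 * ω ^ 2) / 3, (-ω - 2 * ω ^ 2) / 3]

/-- The complex reflection group G₄ as the subgroup of GL(2,ℂ) generated by `AMat`, `BMat`. -/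
def G4 : Subgroup (GL (Fin 2) ℂ) :=
  Subgroup.closure {g : GL (Fin 2) ℂ |
    (g : Matrix (Fin 2) (Fin 2) ℂ) = AMat ∨ (g : Matrix (Fin 2) (Fin 2) ℂ) = BMat}

/-- The matrix underlying an element of G₄. -/
def mat (t : G4) : Matrix (Fin 2) (Fin 2) ℂ := ((t : GL (Fin 2) ℂ) : Matrix (Fin 2) (Fin 2) ℂ)

/-- A reflection in G₄: a non-identity element with eigenvalue 1. -/
def IsReflection (t : G4) : Prop := t ≠ 1 ∧ (mat t - 1).det = 0

/-- The conjugacy class R₁ of reflections of determinant ω. -/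
def R1 : Set G4 := {t | IsReflection t ∧ (mat t).det = ω}

/-- The conjugacy class R₂ of reflections of determinant ω². -/
def R2 : Set G4 := {t | IsReflection t ∧ (mat t).det = ω ^ 2}

/-- A Coxeter element of G₄: an element with a primitive 6th root of unity as eigenvalue. -/
def IsCoxeter (c : G4) : Prop :=
  ∃ ζ : ℂ, IsPrimitiveRoot ζ 6 ∧ (mat c - ζ • (1 : Matrix (Fin 2) (Fin 2) ℂ)).det = 0

/-- The relators of G₅: a³, b³, abab(baba)⁻¹. -/
def g5Rels : Set (FreeGroup (Fin 2)) :=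
  {FreeGroup.of 0 ^ 3, FreeGroup.of 1 ^ 3,
    FreeGroup.of 0 * FreeGroup.of 1 * FreeGroup.of 0 * FreeGroup.of 1 *
      (FreeGroup.of 1 * FreeGroup.of 0 * FreeGroup.of 1 * FreeGroup.of 0)⁻¹}

/-- The complex reflection group G₅, by its presentation ⟨a,b | a³ = b³ = 1, abab = baba⟩. -/
abbrev G5 := PresentedGroup g5Rels

def ga : G5 := PresentedGroup.of 0
def gb : G5 := PresentedGroup.of 1

/-- The conjugacy class of `a` in G₅. -/
def S1 : Set G5 := {t | IsConj ga t}
/-- The conjugacy class of `b` in G₅. -/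
def S2 : Set G5 := {t | IsConj gb t}
/-- The conjugacy class of `a²` in G₅. -/
def S3 : Set G5 := {t | IsConj (ga ^ 2) t}
/-- The conjugacy class of `b²` in G₅. -/
def S4 : Set G5 := {t | IsConj (gb ^ 2) t}

/-- A reflection in G₅: a conjugate of a, b, a², or b². -/
def IsReflection5 (t : G5) : Prop := t ∈ S1 ∨ t ∈ S2 ∨ t ∈ S3 ∨ t ∈ S4

/-- A Coxeter element of G₅: an element of order 12. -/
def IsCoxeter5 (c : G5) : Prop := orderOf c = 12

/-!
`G4` is isomorphic to `SL(2, 𝔽₃)`, through the even part of the Weil representation; reflections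
become nontrivial transvections, and the two classes of reflections are separated by the
abelianization character. Factors of a Coxeter element cannot all commute, since reflections have
order three and a Coxeter element does not. So it suffices to compare two factorizations of the
same element into transvections that do not all commute and have the same classes.

For two factors this is a finite check. For more factors some class occurs twice, and Hurwitz moves
bring a factor of that class to the front while the tail stays noncommuting. Given the first
factors `x` and `y` so obtained from the two factorizations, it suffices by induction on the tails
to join `x` to `y` through steps `x, y, u ↦ y, y⁻¹xy, u` with both tails noncommuting. With at least
three factors in `u`, one step is always available; with one or two factors, at most two steps
suffice, by a finite check.
-/

section Hurwitz

variable {G : Type*} [Group G]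

/-- Hurwitz equivalence of lists of group elements, the list counterpart of `SameHurwitzOrbit`.
Moves at later positions are generated by `swap` and `cons`, which suits induction on lists. -/
inductive HurwitzEquiv : List G → List G → Prop
  | refl (l : List G) : HurwitzEquiv l l
  | symm {l l' : List G} : HurwitzEquiv l l' → HurwitzEquiv l' l
  | trans {l l' l'' : List G} : HurwitzEquiv l l' → HurwitzEquiv l' l'' → HurwitzEquiv l l''
  | swap (a b : G) (l : List G) : HurwitzEquiv (a :: b :: l) (b :: (b⁻¹ * a * b) :: l)
  | cons (x : G) {l l' : List G} : HurwitzEquiv l l' → HurwitzEquiv (x :: l) (x :: l')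

/-- The list has two entries that do not commute. -/
def Noncommuting (l : List G) : Prop := ∃ x ∈ l, ∃ y ∈ l, ¬Commute x y

theorem Noncommuting.mono {l l' : List G} (h : Noncommuting l) (hl : l ⊆ l') :
    Noncommuting l' := by
  obtain ⟨x, hx, y, hy, hxy⟩ := h
  exact ⟨x, hl hx, y, hl hy, hxy⟩

theorem Noncommuting.map {H F : Type*} [Group H] [FunLike F G H] [MonoidHomClass F G H] {f : F}
    (hf : Function.Injective f) {l : List G} (h : Noncommuting l) : Noncommuting (l.map f) := by
  obtain ⟨x, hx, y, hy, hxy⟩ := h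
  refine ⟨f x, List.mem_map_of_mem hx, f y, List.mem_map_of_mem hy, fun hcomm => hxy (hf ?_)⟩
  simpa only [map_mul] using hcomm.eq

theorem noncommuting_cons_of_not_commute {a w : G} {u : List G}
    (hw : w ∈ u) (haw : ¬Commute a w) : Noncommuting (a :: u) :=
  ⟨a, List.mem_cons_self, w, List.mem_cons_of_mem a hw, haw⟩

theorem not_noncommuting_iff {l : List G} :
    ¬Noncommuting l ↔ ∀ x ∈ l, ∀ y ∈ l, Commute x y := by
  simp only [Noncommuting, not_exists, not_and, not_not]

theorem prod_pow_eq_one_of_not_noncommuting {n : ℕ} {l : List G} (hpow : ∀ x ∈ l, x ^ n = 1)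
    (hcomm : ¬Noncommuting l) : l.prod ^ n = 1 := by
  rw [not_noncommuting_iff] at hcomm
  induction l with
  | nil => exact one_pow n
  | cons a l ih =>
    have hal : Commute a l.prod := .list_prod_right l a fun x hx =>
      hcomm a List.mem_cons_self x (List.mem_cons_of_mem a hx)
    rw [List.prod_cons, hal.mul_pow, hpow a List.mem_cons_self, one_mul]
    exact ih (fun x hx => hpow x (List.mem_cons_of_mem a hx)) fun x hx y hy =>
      hcomm x (List.mem_cons_of_mem a hx) y (List.mem_cons_of_mem a hy)

namespace HurwitzEquiv

variable {l l' : List G}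

theorem prod_eq (h : HurwitzEquiv l l') : l.prod = l'.prod := by
  induction h with
  | refl l => rfl
  | symm _ ih => exact ih.symm
  | trans _ _ ih₁ ih₂ => exact ih₁.trans ih₂
  | swap a b l => simp only [List.prod_cons, mul_assoc, mul_inv_cancel_left]
  | cons x _ ih => simp only [List.prod_cons, ih]

theorem perm_map {α : Type*} {f : G → α} (hf : ∀ a b, f (b⁻¹ * a * b) = f a)
    (h : HurwitzEquiv l l') : (l.map f).Perm (l'.map f) := by
  induction h with
  | refl l => exact .refl _
  | symm _ ih => exact ih.symm
  | trans _ _ ih₁ ih₂ => exact ih₁.trans ih₂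
  | swap a b l => simpa only [List.map_cons, hf] using .swap _ _ _
  | cons x _ ih => exact ih.cons (f x)

theorem length_eq (h : HurwitzEquiv l l') : l.length = l'.length := by
  simpa using (h.perm_map (f := fun _ => ()) fun _ _ => rfl).length_eq

theorem forall_mem {P : G → Prop} (hP : ∀ a b, P (b⁻¹ * a * b) = P a) (h : HurwitzEquiv l l')
    (hl : ∀ x ∈ l, P x) : ∀ x ∈ l', P x := by
  intro x hx
  obtain ⟨y, hy, hyx⟩ := List.mem_map.1 ((h.perm_map hP).mem_iff.2 (List.mem_map_of_mem hx))
  exact hyx ▸ hl y hy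

theorem forall_commute_iff (h : HurwitzEquiv l l') (g : G) :
    (∀ x ∈ l, Commute g x) ↔ ∀ x ∈ l', Commute g x := by
  induction h with
  | refl l => rfl
  | symm _ ih => exact ih.symm
  | trans _ _ ih₁ ih₂ => exact ih₁.trans ih₂
  | swap a b l =>
    have hconj (hb : Commute g b) : Commute g (b⁻¹ * a * b) ↔ Commute g a := by
      refine ⟨fun h => ?_, fun h => (hb.inv_right.mul_right h).mul_right hb⟩
      simpa [mul_assoc] using (hb.mul_right h).mul_right hb.inv_right
    simp only [List.forall_mem_cons]
    grind
  | cons x _ ih => simp only [List.forall_mem_cons, ih]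

theorem noncommuting (h : HurwitzEquiv l l') (hl : Noncommuting l) : Noncommuting l' := by
  contrapose! hl
  rw [not_noncommuting_iff] at hl ⊢
  refine fun x hx => (h.forall_commute_iff x).2 fun y hy => ?_
  exact ((h.forall_commute_iff y).2 (hl y hy) x hx).symm

theorem exists_cons_of_mem {x : G} (hx : x ∈ l) : ∃ t, HurwitzEquiv l (x :: t) := by
  induction l with
  | nil => simp at hx
  | cons a l ih =>
    rcases List.mem_cons.1 hx with rfl | hx
    · exact ⟨l, .refl _⟩
    · obtain ⟨t, ht⟩ := ih hx
      exact ⟨_, (ht.cons a).trans (.swap a x t)⟩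

end HurwitzEquiv

namespace SameHurwitzOrbit

variable {k : ℕ} {t t' : Fin k → G}

theorem exists_perm_isConj (h : SameHurwitzOrbit t t') :
    ∃ σ : Equiv.Perm (Fin k), ∀ i, IsConj (t i) (t' (σ i)) := by
  induction h with
  | rel t t' h =>
    obtain ⟨i, hi, h_fst, h_snd, h_rest⟩ := h
    refine ⟨Equiv.swap ⟨i, Nat.lt_of_succ_lt hi⟩ ⟨i + 1, hi⟩, fun j => ?_⟩
    by_cases hj : j = ⟨i, Nat.lt_of_succ_lt hi⟩
    · rw [hj, Equiv.swap_apply_left, h_snd]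
      exact isConj_iff.2 ⟨(t ⟨i + 1, hi⟩)⁻¹, by simp⟩
    by_cases hj' : j = ⟨i + 1, hi⟩
    · rw [hj', Equiv.swap_apply_right, h_fst]
    · rw [Equiv.swap_apply_of_ne_of_ne hj hj',
        h_rest j (fun e => hj (Fin.ext e)) fun e => hj' (Fin.ext e)]
  | refl t => exact ⟨1, fun i => IsConj.refl _⟩
  | symm t t' _ ih =>
    obtain ⟨σ, hσ⟩ := ih
    exact ⟨σ.symm, fun i => by simpa using (hσ (σ.symm i)).symm⟩
  | trans t₁ t₂ t₃ _ _ ih₁ ih₂ =>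
    obtain ⟨σ, hσ⟩ := ih₁
    obtain ⟨τ, hτ⟩ := ih₂
    exact ⟨σ.trans τ, fun i => (hσ i).trans (hτ (σ i))⟩

theorem map {H : Type*} [Group H] (f : G →* H) (h : SameHurwitzOrbit t t') :
    SameHurwitzOrbit (f ∘ t) (f ∘ t') := by
  induction h with
  | rel t t' h =>
    obtain ⟨i, hi, h_fst, h_snd, h_rest⟩ := h
    exact .rel _ _ ⟨i, hi, by simp [h_fst], by simp [h_snd], fun j hj hj' => by
      simp [h_rest j hj hj']⟩
  | refl t => exact .refl _
  | symm t t' _ ih => exact .symm _ _ ih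
  | trans t₁ t₂ t₃ _ _ ih₁ ih₂ => exact .trans _ _ _ ih₁ ih₂

theorem cons (x : G) (h : SameHurwitzOrbit t t') :
    SameHurwitzOrbit (Fin.cons x t : Fin (k + 1) → G) (Fin.cons x t') := by
  induction h with
  | rel t t' h =>
    obtain ⟨i, hi, h_fst, h_snd, h_rest⟩ := h
    refine .rel _ _ ⟨i + 1, Nat.succ_lt_succ hi, h_fst, h_snd, fun j => ?_⟩
    refine Fin.cases (fun _ _ => rfl) (fun j hj hj' => ?_) j
    simp only [Fin.val_succ, ne_eq, Nat.add_right_cancel_iff] at hj hj'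
    exact h_rest j hj hj'
  | refl t => exact .refl _
  | symm t t' _ ih => exact .symm _ _ ih
  | trans t₁ t₂ t₃ _ _ ih₁ ih₂ => exact .trans _ _ _ ih₁ ih₂

theorem swap_cons_cons (a b : G) (t : Fin k → G) :
    SameHurwitzOrbit (Fin.cons a (Fin.cons b t : Fin (k + 1) → G) : Fin (k + 2) → G)
      (Fin.cons b (Fin.cons (b⁻¹ * a * b) t : Fin (k + 1) → G)) := by
  refine .rel _ _ ⟨0, by simp, rfl, rfl, fun j => ?_⟩
  refine Fin.cases (fun h _ => absurd rfl h) (fun j => ?_) j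
  exact Fin.cases (fun _ h => absurd rfl h) (fun _ _ _ => rfl) j

end SameHurwitzOrbit

theorem HurwitzEquiv.sameHurwitzOrbit {k : ℕ} {t t' : Fin k → G}
    (h : HurwitzEquiv (List.ofFn t) (List.ofFn t')) : SameHurwitzOrbit t t' := by
  generalize hl : List.ofFn t = l, hl' : List.ofFn t' = l' at h
  induction h generalizing k with
  | refl l =>
    rw [List.ofFn_injective (hl.trans hl'.symm)]
    exact .refl _
  | symm _ ih => exact .symm _ _ (ih hl' hl)
  | @trans _ m _ h _ ih₁ ih₂ =>
    obtain rfl : k = m.length := by rw [← h.length_eq, ← hl, List.length_ofFn]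
    exact .trans _ _ _ (ih₁ hl (List.ofFn_get m)) (ih₂ (List.ofFn_get m) hl')
  | swap a b l =>
    obtain rfl : k = l.length + 2 := by simpa using congrArg List.length hl
    have ht : t = Fin.cons a (Fin.cons b l.get : Fin (l.length + 1) → G) :=
      List.ofFn_injective (by rw [hl, List.ofFn_cons, List.ofFn_cons, List.ofFn_get])
    have ht' : t' = Fin.cons b (Fin.cons (b⁻¹ * a * b) l.get : Fin (l.length + 1) → G) :=
      List.ofFn_injective (by rw [hl', List.ofFn_cons, List.ofFn_cons, List.ofFn_get])
    exact ht ▸ ht' ▸ SameHurwitzOrbit.swap_cons_cons a b l.get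
  | cons x _ ih =>
    cases k with
    | zero => simp at hl
    | succ k =>
      rw [List.ofFn_succ, List.cons.injEq] at hl hl'
      rw [← Fin.cons_self_tail t, ← Fin.cons_self_tail t', hl.1, hl'.1]
      exact (ih hl.2 hl'.2).cons x

end Hurwitz

section SpecialLinear

/-- The group `SL(2, 𝔽₃)`, a finite model of `G4` in which statements can be decided. -/
abbrev SL23 : Type := SpecialLinearGroup (Fin 2) (ZMod 3)

/-- The nontrivial transvections of `SL(2, 𝔽₃)`, which correspond to the reflections of `G4`;
they are the unipotent elements, hence recognised by their trace. -/
def IsTransvection (g : SL23) : Prop := g ≠ 1 ∧ (g : Matrix (Fin 2) (Fin 2) (ZMod 3)).trace = 2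

instance : DecidablePred IsTransvection := fun _ => instDecidableAnd

instance (a b : SL23) : Decidable (Commute a b) := decEq (a * b) (b * a)

/-- The abelianization character of `SL(2, 𝔽₃)`. It sends the upper unitriangular matrix with
off-diagonal entry `n` to `n`, and it kills `-1` and the Weyl element, so the Bruhat decomposition
gives the formula. It separates the two classes of transvections. -/
def cubicChar (g : SL23) : ZMod 3 :=
  if g 1 0 = 0 then g 0 0 * g 0 1 else (g 0 0 + g 1 1) * g 1 0

theorem cubicChar_mul : ∀ g h : SL23, cubicChar (g * h) = cubicChar g + cubicChar h := by
  decide +kernel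

theorem cubicChar_one : cubicChar 1 = 0 := by decide

theorem cubicChar_list_prod (l : List SL23) : cubicChar l.prod = (l.map cubicChar).sum := by
  induction l with
  | nil => exact cubicChar_one
  | cons a l ih => rw [List.prod_cons, cubicChar_mul, ih, List.map_cons, List.sum_cons]

theorem cubicChar_conj (g h : SL23) : cubicChar (h⁻¹ * g * h) = cubicChar g := by
  have hinv : cubicChar h⁻¹ + cubicChar h = 0 := by
    rw [← cubicChar_mul, inv_mul_cancel, cubicChar_one]
  rw [cubicChar_mul, cubicChar_mul, add_right_comm, hinv, zero_add]

namespace IsTransvection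

theorem conj_eq (g h : SL23) : IsTransvection (h⁻¹ * g * h) = IsTransvection g := by
  have hone : h⁻¹ * g * h = 1 ↔ g = 1 := by
    rw [mul_assoc, inv_mul_eq_one, eq_comm, mul_eq_right]
  have htrace : (h⁻¹ * g * h).1.trace = g.1.trace :=
    calc (h⁻¹ * g * h).1.trace = (h * (h⁻¹ * g)).1.trace := trace_mul_comm (h⁻¹ * g).1 h.1
      _ = g.1.trace := by rw [mul_inv_cancel_left]
  simp only [IsTransvection, ne_eq, hone, htrace]

theorem inv : ∀ {g : SL23}, IsTransvection g → IsTransvection g⁻¹ := by decide +kernel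

theorem pow_three : ∀ {g : SL23}, IsTransvection g → g ^ 3 = 1 := by decide +kernel

theorem mul_self {g : SL23} (hg : IsTransvection g) : g * g = g⁻¹ := by
  rw [eq_inv_iff_mul_eq_one, ← pow_two, ← pow_succ, hg.pow_three]

theorem cubicChar_ne_zero : ∀ {g : SL23}, IsTransvection g → cubicChar g ≠ 0 := by decide +kernel

theorem eq_or_eq_inv_of_commute : ∀ {a b : SL23}, IsTransvection a → IsTransvection b →
    Commute a b → b = a ∨ b = a⁻¹ := by
  decide +kernel

theorem commute_trans {a b c : SL23} (ha : IsTransvection a) (hb : IsTransvection b)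
    (hab : Commute a b) (hbc : Commute b c) : Commute a c := by
  rcases hb.eq_or_eq_inv_of_commute ha hab.symm with rfl | rfl
  · exact hbc
  · exact hbc.inv_left

theorem mul_of_not_commute : ∀ {a b : SL23}, IsTransvection a → IsTransvection b →
    ¬Commute a b → a * b ≠ 1 ∧ a * b ≠ -1 ∧ ¬IsTransvection (a * b) := by
  decide +kernel

theorem exists_not_commute_not_commute : ∀ {a b : SL23}, IsTransvection a → IsTransvection b →
    ∀ {ε : ZMod 3}, ε ≠ 0 →
    ∃ w, (IsTransvection w ∧ cubicChar w = ε) ∧ ¬Commute a w ∧ ¬Commute b w := by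
  decide +kernel

theorem exists_cubicChar_eq : ∀ {ε : ZMod 3}, ε ≠ 0 → ∃ w, IsTransvection w ∧ cubicChar w = ε := by
  decide +kernel

theorem head_of_mul_eq : ∀ {a : SL23}, IsTransvection a → ∀ {b}, IsTransvection b →
    ¬Commute a b → ∀ {x}, IsTransvection x → IsTransvection (x⁻¹ * (a * b)) →
    x = a ∨ x = b ∨ x = (a * b)⁻¹ * a * (a * b) ∨ x = (a * b)⁻¹ * b * (a * b) := by
  decide +kernel

end IsTransvection

theorem exists_not_commute_mul_eq : ∀ {v : SL23}, v ≠ 1 → v ≠ -1 → ¬IsTransvection v →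
    ∃ a, IsTransvection a ∧ IsTransvection (a⁻¹ * v) ∧ ¬Commute a (a⁻¹ * v) := by
  decide +kernel

theorem exists_not_commute_mul_mul_eq : ∀ {v : SL23} {e₁ e₂ e₃ : ZMod 3}, e₁ ≠ 0 → e₂ ≠ 0 →
    e₃ ≠ 0 → e₁ + e₂ + e₃ = cubicChar v → v ≠ 1 ∨ e₁ ≠ e₂ ∨ e₂ ≠ e₃ →
    ∃ a, (IsTransvection a ∧ cubicChar a = e₁) ∧ ∃ b, (IsTransvection b ∧ cubicChar b = e₂) ∧
      ¬Commute a b ∧ IsTransvection ((a * b)⁻¹ * v) := by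
  decide +kernel

end SpecialLinear

section Factorizations

/-- `l` is a factorization of `p` into transvections of `SL(2, 𝔽₃)` that do not all commute,
with multiset of conjugacy classes `e`. The classes are recorded by the values of `cubicChar`. -/
structure TransvectionFactorization (e : List (ZMod 3)) (p : SL23) (l : List SL23) : Prop where
  isTransvection : ∀ x ∈ l, IsTransvection x
  noncommuting : Noncommuting l
  prod_eq : l.prod = p
  perm : (l.map cubicChar).Perm e

namespace TransvectionFactorization

variable {e e' : List (ZMod 3)} {p : SL23} {l l' : List SL23}

theorem of_hurwitzEquiv (h : TransvectionFactorization e p l) (hl : HurwitzEquiv l l') :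
    TransvectionFactorization e p l' where
  isTransvection := hl.forall_mem IsTransvection.conj_eq h.isTransvection
  noncommuting := hl.noncommuting h.noncommuting
  prod_eq := hl.prod_eq ▸ h.prod_eq
  perm := (hl.perm_map cubicChar_conj).symm.trans h.perm

theorem of_perm (h : TransvectionFactorization e p l) (he : e.Perm e') :
    TransvectionFactorization e' p l :=
  { h with perm := h.perm.trans he }

theorem tail {x : SL23} {ε : ZMod 3} (h : TransvectionFactorization (ε :: e) p (x :: l))
    (hε : cubicChar x = ε) (hl : Noncommuting l) : TransvectionFactorization e (x⁻¹ * p) l where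
  isTransvection y hy := h.isTransvection y (List.mem_cons_of_mem x hy)
  noncommuting := hl
  prod_eq := by rw [← h.prod_eq, List.prod_cons, inv_mul_cancel_left]
  perm := (List.perm_cons ε).1 (hε ▸ h.perm)

theorem length_eq (h : TransvectionFactorization e p l) : l.length = e.length := by
  simpa using h.perm.length_eq

theorem sum_eq (h : TransvectionFactorization e p l) : e.sum = cubicChar p := by
  rw [← h.perm.sum_eq, ← cubicChar_list_prod, h.prod_eq]

theorem ne_zero (h : TransvectionFactorization e p l) : ∀ c ∈ e, c ≠ 0 := by
  intro c hc
  obtain ⟨x, hx, rfl⟩ := List.mem_map.1 (h.perm.mem_iff.2 hc)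
  exact (h.isTransvection x hx).cubicChar_ne_zero

theorem exists_mem (h : TransvectionFactorization e p l) {ε : ZMod 3} (hε : ε ∈ e) :
    ∃ x ∈ l, cubicChar x = ε :=
  List.mem_map.1 (h.perm.mem_iff.2 hε)

theorem two_le_length (h : TransvectionFactorization e p l) : 2 ≤ e.length := by
  obtain ⟨x, hx, y, hy, hxy⟩ := h.noncommuting
  rw [← h.length_eq]
  match l, hx, hy with
  | [a], hx, hy =>
    rw [List.mem_singleton] at hx hy
    exact absurd (hx ▸ hy ▸ Commute.refl a) hxy
  | _ :: _ :: _, _, _ => simp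

theorem exists_pair (h : TransvectionFactorization e p l) (he : e.length = 2) :
    ∃ a b, l = [a, b] ∧ IsTransvection a ∧ IsTransvection b ∧ ¬Commute a b ∧ a * b = p := by
  obtain ⟨a, b, rfl⟩ := List.length_eq_two.1 (h.length_eq.trans he)
  refine ⟨a, b, rfl, h.isTransvection a (by simp), h.isTransvection b (by simp), ?_, ?_⟩
  · intro hab
    refine not_noncommuting_iff.2 ?_ h.noncommuting
    simp [hab, hab.symm]
  · simpa using h.prod_eq

theorem hurwitzEquiv_of_length_eq_two (h : TransvectionFactorization e p l)
    (h' : TransvectionFactorization e p l') (he : e.length = 2) : HurwitzEquiv l l' := by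
  obtain ⟨a, b, rfl, ha, hb, hab, rfl⟩ := h.exists_pair he
  obtain ⟨x, y, rfl, hx, hy, -, hxy⟩ := h'.exists_pair he
  obtain rfl : y = x⁻¹ * (a * b) := eq_inv_mul_of_mul_eq hxy
  have swap_swap : HurwitzEquiv [a, b] [(a * b)⁻¹ * a * (a * b), (a * b)⁻¹ * b * (a * b)] := by
    have ha' : (a * b)⁻¹ * a * (a * b) = b⁻¹ * a * b := by group
    have hb' : (a * b)⁻¹ * b * (a * b) = (b⁻¹ * a * b)⁻¹ * b * (b⁻¹ * a * b) := by group
    rw [ha', hb']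
    exact (HurwitzEquiv.swap a b []).trans (.swap b _ [])
  rcases ha.head_of_mul_eq hb hab hx hy with rfl | rfl | rfl | rfl
  · simpa using HurwitzEquiv.refl [x, b]
  · simpa only [mul_assoc] using HurwitzEquiv.swap a x []
  · convert swap_swap using 3; group
  · convert swap_swap.trans (.swap _ _ []) using 3; group

theorem ne_one_of_length_eq_three (h : TransvectionFactorization e p l) (he : e.length = 3) :
    p ≠ 1 := by
  rintro rfl
  obtain ⟨a, b, c, rfl⟩ := List.length_eq_three.1 (h.length_eq.trans he)
  have hprod : a * b * c = 1 := by simpa [mul_assoc] using h.prod_eq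
  obtain rfl : c = (a * b)⁻¹ := eq_inv_of_mul_eq_one_right hprod
  have hab : Commute a b := by
    by_contra hab
    have hinv := (h.isTransvection _ (by simp : (a * b)⁻¹ ∈ _)).inv
    rw [inv_inv] at hinv
    exact ((h.isTransvection a (by simp)).mul_of_not_commute
      (h.isTransvection b (by simp)) hab).2.2 hinv
  have ha : Commute a (a * b)⁻¹ := ((Commute.refl a).mul_right hab).inv_right
  have hb : Commute b (a * b)⁻¹ := (hab.symm.mul_right (.refl b)).inv_right
  refine not_noncommuting_iff.2 ?_ h.noncommuting
  simp only [List.forall_mem_cons, List.not_mem_nil, IsEmpty.forall_iff, implies_true, and_true,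
    Commute.refl, hab, hab.symm, ha, ha.symm, hb, hb.symm]

theorem noncommuting_conj_cons {x y : SL23} {r : List SL23}
    (h : TransvectionFactorization e p (x :: y :: r)) (hyr : ¬Noncommuting (y :: r))
    (hr : r ≠ []) : Noncommuting ((y⁻¹ * x * y) :: r) := by
  by_contra hxr
  obtain ⟨z, r, rfl⟩ := List.exists_cons_of_ne_nil hr
  have hswap := h.of_hurwitzEquiv (.swap x y (z :: r))
  rw [not_noncommuting_iff] at hyr hxr
  have hxy : Commute (y⁻¹ * x * y) y :=
    (hswap.isTransvection _ (by simp)).commute_trans (hswap.isTransvection z (by simp))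
      (hxr _ (by simp) z (by simp)) (hyr z (by simp) y (by simp))
  refine not_noncommuting_iff.2 ?_ hswap.noncommuting
  simp only [List.forall_mem_cons] at hyr hxr ⊢
  exact ⟨⟨.refl y, hxy.symm, hyr.1.2⟩, ⟨hxy, hxr.1⟩, ⟨hyr.2.1.1, hxr.2.1⟩,
    fun w hw => ⟨(hyr.2.2 w hw).1, hxr.2.2 w hw⟩⟩

/-- If the factors after the first all commute, swapping the first two restores a noncommuting
tail, because commuting is transitive on transvections. -/
theorem exists_hurwitzEquiv_cons {ε : ZMod 3} (h : TransvectionFactorization (ε :: ε :: e) p l)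
    (he : e ≠ []) : ∃ x t, HurwitzEquiv l (x :: t) ∧ IsTransvection x ∧ cubicChar x = ε ∧
      TransvectionFactorization (ε :: e) (x⁻¹ * p) t := by
  obtain ⟨x, hxl, hx⟩ := h.exists_mem List.mem_cons_self
  obtain ⟨s, hs⟩ := HurwitzEquiv.exists_cons_of_mem hxl
  have hsε : (s.map cubicChar).Perm (ε :: e) :=
    (List.perm_cons ε).1 (hx ▸ (h.of_hurwitzEquiv hs).perm)
  obtain ⟨y, hys, hy⟩ := List.mem_map.1 (hsε.mem_iff.2 List.mem_cons_self)
  obtain ⟨r, hr⟩ := HurwitzEquiv.exists_cons_of_mem hys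
  have hxyr : HurwitzEquiv l (x :: y :: r) := hs.trans (hr.cons x)
  have hfac := h.of_hurwitzEquiv hxyr
  by_cases hyr : Noncommuting (y :: r)
  · exact ⟨x, _, hxyr, hfac.isTransvection x (by simp), hx, hfac.tail hx hyr⟩
  have hswap := hxyr.trans (.swap x y r)
  have hfac' := h.of_hurwitzEquiv hswap
  refine ⟨y, _, hswap, hfac.isTransvection y (by simp), hy, hfac'.tail hy ?_⟩
  refine hfac.noncommuting_conj_cons hyr ?_
  rintro rfl
  exact he (by simpa using hfac.length_eq)

end TransvectionFactorization

/-- `x` and `y` are the first factors of two factorizations of `p`, the tails having classes `e`,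
that differ by a Hurwitz move in the first two positions. -/
def Linked (e : List (ZMod 3)) (p x y : SL23) : Prop :=
  ∃ u, TransvectionFactorization e (x⁻¹ * p) (y :: u) ∧
    TransvectionFactorization e (y⁻¹ * p) ((y⁻¹ * x * y) :: u)

variable {e : List (ZMod 3)} {p x y : SL23}

theorem hurwitzEquiv_cons_of_reflTransGen_linked
    (htail : ∀ {q t t'}, TransvectionFactorization e q t → TransvectionFactorization e q t' →
      HurwitzEquiv t t')
    (hxy : Relation.ReflTransGen (Linked e p) x y) {t t' : List SL23}
    (ht : TransvectionFactorization e (x⁻¹ * p) t)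
    (ht' : TransvectionFactorization e (y⁻¹ * p) t') : HurwitzEquiv (x :: t) (y :: t') := by
  induction hxy generalizing t' with
  | refl => exact (htail ht ht').cons x
  | @tail y z _ hyz ih =>
    obtain ⟨u, hzu, hyu⟩ := hyz
    exact ((ih hzu).trans (.swap y z u)).trans ((htail hyu ht').cons z)

theorem linked_of_tail (hx : IsTransvection x) (hy : IsTransvection y)
    (hxy : cubicChar y = cubicChar x) {u : List SL23} (hu : ∀ w ∈ u, IsTransvection w)
    (hprod : x * y * u.prod = p) (hcls : (u.map cubicChar).Perm e)
    (hyu : Noncommuting (y :: u)) (hxu : Noncommuting ((y⁻¹ * x * y) :: u)) :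
    Linked (cubicChar x :: e) p x y := by
  refine ⟨u, ⟨List.forall_mem_cons.2 ⟨hy, hu⟩, hyu, ?_, ?_⟩, ⟨List.forall_mem_cons.2 ⟨?_, hu⟩,
    hxu, ?_, ?_⟩⟩
  · rw [← hprod, List.prod_cons]; group
  · rw [List.map_cons, hxy]; exact hcls.cons _
  · rwa [IsTransvection.conj_eq]
  · rw [← hprod, List.prod_cons]; group
  · rw [List.map_cons, cubicChar_conj]; exact hcls.cons _

/-- For transvections `x` and `y`, the condition that a transvection `v` with `x * y * v = p`
commutes neither with `y` nor with `y⁻¹ * x * y`. -/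
def Separated (p x y : SL23) : Prop := p ≠ x ∧ p ≠ y ∧ p * y ≠ x ∧ x * p ≠ y

instance (p x y : SL23) : Decidable (Separated p x y) := instDecidableAnd

theorem Separated.not_commute {v : SL23} (h : Separated (x * y * v) x y) (hx : IsTransvection x)
    (hy : IsTransvection y) (hv : IsTransvection v) :
    ¬Commute y v ∧ ¬Commute (y⁻¹ * x * y) v := by
  obtain ⟨hpx, hpy, hpyx, hxpy⟩ := h
  have hconj : IsTransvection (y⁻¹ * x * y) := by rwa [IsTransvection.conj_eq]
  constructor <;> intro hcomm
  · rcases hy.eq_or_eq_inv_of_commute hv hcomm with rfl | rfl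
    · exact hpyx (by rw [mul_assoc x, hv.mul_self, inv_mul_cancel_right])
    · exact hpx (mul_inv_cancel_right x y)
  · rcases hconj.eq_or_eq_inv_of_commute hv hcomm with rfl | rfl
    · refine hxpy ?_
      calc x * (x * y * (y⁻¹ * x * y)) = x * x * x * y := by group
        _ = y := by rw [hx.mul_self, inv_mul_cancel, one_mul]
    · exact hpy (by group)

/-- The closed form of `Linked` when one factor follows `x` and `y`. -/
def SingleLinked (p x y : SL23) : Prop := Separated p x y ∧ IsTransvection ((x * y)⁻¹ * p)

instance (p x y : SL23) : Decidable (SingleLinked p x y) := instDecidableAnd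

theorem SingleLinked.linked {c : ZMod 3} (h : SingleLinked p x y) (hx : IsTransvection x)
    (hy : IsTransvection y) (hxy : cubicChar y = cubicChar x)
    (hc : cubicChar p = cubicChar x + cubicChar x + c) : Linked [cubicChar x, c] p x y := by
  obtain ⟨hsep, hv⟩ := h
  obtain ⟨v, rfl⟩ : ∃ v, p = x * y * v := ⟨(x * y)⁻¹ * p, by group⟩
  rw [inv_mul_cancel_left] at hv
  obtain ⟨hyv, hxv⟩ := hsep.not_commute hx hy hv
  have hcv : cubicChar v = c := by
    rwa [cubicChar_mul, cubicChar_mul, hxy, add_right_inj] at hc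
  exact linked_of_tail (u := [v]) hx hy hxy (by simpa using hv) (by simp) (by simp [hcv])
    (noncommuting_cons_of_not_commute (by simp) hyv)
    (noncommuting_cons_of_not_commute (by simp) hxv)

/-- The closed form of `Linked` when two factors follow `x` and `y`. -/
def PairLinked (p x y : SL23) : Prop := Separated p x y ∧ p ≠ -(x * y)

instance (p x y : SL23) : Decidable (PairLinked p x y) := instDecidableAnd

theorem exists_pair_noncommuting {a b v : SL23} (ha : IsTransvection a) (hb : IsTransvection b)
    (hv : v ≠ -1) (hcomm : IsTransvection v → ¬Commute a v ∧ ¬Commute b v) :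
    ∃ w₁ w₂, IsTransvection w₁ ∧ IsTransvection w₂ ∧ w₁ * w₂ = v ∧
      Noncommuting [a, w₁, w₂] ∧ Noncommuting [b, w₁, w₂] := by
  by_cases hv₁ : v = 1
  · obtain ⟨w, ⟨hw, -⟩, haw, hbw⟩ := ha.exists_not_commute_not_commute hb one_ne_zero
    exact ⟨w, w⁻¹, hw, hw.inv, by rw [mul_inv_cancel, hv₁],
      noncommuting_cons_of_not_commute (by simp) haw,
      noncommuting_cons_of_not_commute (by simp) hbw⟩
  by_cases hvt : IsTransvection v
  · obtain ⟨hav, hbv⟩ := hcomm hvt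
    exact ⟨v⁻¹, v⁻¹, hvt.inv, hvt.inv, by rw [hvt.inv.mul_self, inv_inv],
      noncommuting_cons_of_not_commute List.mem_cons_self (by rwa [Commute.inv_right_iff]),
      noncommuting_cons_of_not_commute List.mem_cons_self (by rwa [Commute.inv_right_iff])⟩
  · obtain ⟨w, hw, hwv, hcomm⟩ := exists_not_commute_mul_eq hv₁ hv hvt
    have hpair : Noncommuting [w, w⁻¹ * v] := noncommuting_cons_of_not_commute (by simp) hcomm
    exact ⟨w, w⁻¹ * v, hw, hwv, mul_inv_cancel_left w v, hpair.mono (by simp),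
      hpair.mono (by simp)⟩

theorem perm_pair_of_add_eq : ∀ {a b c d : ZMod 3}, a ≠ 0 → b ≠ 0 → c ≠ 0 → d ≠ 0 →
    a + b = c + d → [a, b].Perm [c, d] := by
  decide

theorem PairLinked.linked {c d : ZMod 3} (h : PairLinked p x y) (hx : IsTransvection x)
    (hy : IsTransvection y) (hxy : cubicChar y = cubicChar x) (hc : c ≠ 0) (hd : d ≠ 0)
    (hcd : cubicChar p = cubicChar x + cubicChar x + (c + d)) :
    Linked [cubicChar x, c, d] p x y := by
  obtain ⟨hsep, hneg⟩ := h
  obtain ⟨v, rfl⟩ : ∃ v, p = x * y * v := ⟨(x * y)⁻¹ * p, by group⟩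
  have hv : v ≠ -1 := by rintro rfl; exact hneg (by rw [mul_neg, mul_one])
  obtain ⟨w₁, w₂, hw₁, hw₂, rfl, hyw, hxw⟩ := exists_pair_noncommuting hy
    (by rwa [IsTransvection.conj_eq] : IsTransvection (y⁻¹ * x * y)) hv (hsep.not_commute hx hy)
  refine linked_of_tail hx hy hxy (by simp [hw₁, hw₂]) (by simp) ?_ hyw hxw
  refine perm_pair_of_add_eq hw₁.cubicChar_ne_zero hw₂.cubicChar_ne_zero hc hd ?_
  rwa [cubicChar_mul, cubicChar_mul, hxy, add_right_inj, cubicChar_mul] at hcd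

theorem exists_triple_noncommuting {e₁ e₂ e₃ : ZMod 3} {a b v : SL23} (he₁ : e₁ ≠ 0)
    (he₂ : e₂ ≠ 0) (he₃ : e₃ ≠ 0) (ha : IsTransvection a) (hb : IsTransvection b)
    (hv : e₁ + e₂ + e₃ = cubicChar v) :
    ∃ u, (∀ w ∈ u, IsTransvection w) ∧ u.map cubicChar = [e₁, e₂, e₃] ∧ u.prod = v ∧
      Noncommuting (a :: u) ∧ Noncommuting (b :: u) := by
  by_cases hconst : v ≠ 1 ∨ e₁ ≠ e₂ ∨ e₂ ≠ e₃
  · obtain ⟨w₁, ⟨hw₁, rfl⟩, w₂, ⟨hw₂, rfl⟩, hcomm, hw₃⟩ :=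
      exists_not_commute_mul_mul_eq he₁ he₂ he₃ hv hconst
    have hprod : w₁ * w₂ * ((w₁ * w₂)⁻¹ * v) = v := mul_inv_cancel_left _ v
    have hchar : cubicChar ((w₁ * w₂)⁻¹ * v) = e₃ := by
      rwa [← hprod, cubicChar_mul, cubicChar_mul w₁, add_right_inj, eq_comm] at hv
    have hnc : Noncommuting [w₁, w₂, (w₁ * w₂)⁻¹ * v] :=
      noncommuting_cons_of_not_commute (by simp) hcomm
    exact ⟨[w₁, w₂, (w₁ * w₂)⁻¹ * v], by simpa using ⟨hw₁, hw₂, by simpa using hw₃⟩,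
      by rw [List.map_cons, List.map_cons, List.map_cons, hchar, List.map_nil],
      by simp [mul_assoc], hnc.mono (List.subset_cons_self a _),
      hnc.mono (List.subset_cons_self b _)⟩
  · push Not at hconst
    obtain ⟨rfl, rfl, rfl⟩ := hconst
    obtain ⟨w, ⟨hw, rfl⟩, haw, hbw⟩ := ha.exists_not_commute_not_commute hb he₁
    exact ⟨[w, w, w], by simp [hw], rfl, by simp [hw.mul_self],
      noncommuting_cons_of_not_commute (by simp) haw,
      noncommuting_cons_of_not_commute (by simp) hbw⟩

theorem exists_noncommuting_of_three_le {a b : SL23} (ha : IsTransvection a)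
    (hb : IsTransvection b) : ∀ {e : List (ZMod 3)}, 3 ≤ e.length → (∀ c ∈ e, c ≠ 0) →
    ∀ {v : SL23}, e.sum = cubicChar v →
    ∃ u, (∀ w ∈ u, IsTransvection w) ∧ u.map cubicChar = e ∧ u.prod = v ∧
      Noncommuting (a :: u) ∧ Noncommuting (b :: u)
  | [e₁, e₂, e₃], _, he, v, hv => by
    simp only [List.forall_mem_cons] at he
    exact exists_triple_noncommuting he.1 he.2.1 he.2.2.1 ha hb (by simpa [add_assoc] using hv)
  | c :: e₁ :: e₂ :: e₃ :: e, _, he, v, hv => by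
    obtain ⟨hc, he'⟩ := List.forall_mem_cons.1 he
    obtain ⟨w, hw, rfl⟩ := IsTransvection.exists_cubicChar_eq hc
    have hsum : (e₁ :: e₂ :: e₃ :: e).sum = cubicChar (w⁻¹ * v) := by
      rw [← add_right_inj (cubicChar w), ← cubicChar_mul, mul_inv_cancel_left, ← hv]
      exact List.sum_cons.symm
    obtain ⟨u, hu, hue, hprod, hau, hbu⟩ :=
      exists_noncommuting_of_three_le ha hb (by simp) he' hsum
    have hsub (a : SL23) : a :: u ⊆ a :: w :: u :=
      List.cons_subset_cons a (List.subset_cons_self w u)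
    exact ⟨w :: u, List.forall_mem_cons.2 ⟨hw, hu⟩, by rw [List.map_cons, hue],
      by rw [List.prod_cons, hprod, mul_inv_cancel_left], hau.mono (hsub a), hbu.mono (hsub b)⟩

theorem linked_of_three_le (hx : IsTransvection x) (hy : IsTransvection y)
    (hxy : cubicChar y = cubicChar x) (hlen : 3 ≤ e.length) (he : ∀ c ∈ e, c ≠ 0)
    (hsum : cubicChar p = cubicChar x + cubicChar x + e.sum) : Linked (cubicChar x :: e) p x y := by
  obtain ⟨v, rfl⟩ : ∃ v, p = x * y * v := ⟨(x * y)⁻¹ * p, by group⟩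
  rw [cubicChar_mul, cubicChar_mul, hxy, add_right_inj, eq_comm] at hsum
  obtain ⟨u, hu, rfl, rfl, hyu, hxu⟩ := exists_noncommuting_of_three_le hy
    (by rwa [IsTransvection.conj_eq] : IsTransvection (y⁻¹ * x * y)) hlen he hsum
  exact linked_of_tail hx hy hxy hu rfl (.refl _) hyu hxu

theorem singleLinked_path : ∀ {p x : SL23},
    IsTransvection x ∧ p ≠ x ∧ p ≠ -x ∧ ¬IsTransvection (x⁻¹ * p) →
    cubicChar p ≠ cubicChar x + cubicChar x → ∀ {y : SL23}, cubicChar y = cubicChar x →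
    IsTransvection y ∧ p ≠ y ∧ p ≠ -y ∧ ¬IsTransvection (y⁻¹ * p) →
    x = y ∨ SingleLinked p x y ∨ ∃ z, (IsTransvection z ∧ cubicChar z = cubicChar x) ∧
      SingleLinked p x z ∧ SingleLinked p z y := by
  decide +kernel

theorem pairLinked_path : ∀ {x : SL23}, IsTransvection x → ∀ {y}, IsTransvection y →
    cubicChar y = cubicChar x → ∀ {p}, p ≠ x → p ≠ y →
    ∃ z, (IsTransvection z ∧ cubicChar z = cubicChar x) ∧ PairLinked p x z ∧ PairLinked p z y := by
  decide +kernel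

theorem exists_perm_cons_cons : ∀ {e : List (ZMod 3)}, 3 ≤ e.length → (∀ c ∈ e, c ≠ 0) →
    ∃ ε e', e' ≠ [] ∧ e.Perm (ε :: ε :: e')
  | a :: b :: c :: e, _, he => by
    have pigeonhole : ∀ a b c : ZMod 3, a ≠ 0 → b ≠ 0 → c ≠ 0 → a = b ∨ a = c ∨ b = c := by decide
    rcases pigeonhole a b c (he a (by simp)) (he b (by simp)) (he c (by simp)) with
      rfl | rfl | rfl
    · exact ⟨a, c :: e, List.cons_ne_nil c e, .refl _⟩
    · exact ⟨a, b :: e, List.cons_ne_nil b e, .cons a (.swap a b e)⟩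
    · exact ⟨b, a :: e, List.cons_ne_nil a e, (List.Perm.swap b a _).trans (.cons b (.swap b a e))⟩

namespace TransvectionFactorization

variable {t t' : List SL23}

theorem head_of_length_eq_two (h : TransvectionFactorization e (x⁻¹ * p) t) (he : e.length = 2) :
    p ≠ x ∧ p ≠ -x ∧ ¬IsTransvection (x⁻¹ * p) := by
  obtain ⟨a, b, -, ha, hb, hab, hprod⟩ := h.exists_pair he
  obtain ⟨hone, hneg, htrans⟩ := ha.mul_of_not_commute hb hab
  rw [hprod] at hone hneg htrans
  refine ⟨?_, ?_, htrans⟩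
  · rintro rfl
    exact hone (inv_mul_cancel p)
  · rintro rfl
    exact hneg (by rw [mul_neg, inv_mul_cancel])

theorem reflTransGen_linked (hx : IsTransvection x) (hy : IsTransvection y)
    (hxy : cubicChar y = cubicChar x) (he : e ≠ [])
    (ht : TransvectionFactorization (cubicChar x :: e) (x⁻¹ * p) t)
    (ht' : TransvectionFactorization (cubicChar x :: e) (y⁻¹ * p) t') :
    Relation.ReflTransGen (Linked (cubicChar x :: e) p) x y := by
  have hsum : cubicChar p = cubicChar x + cubicChar x + e.sum := by
    rw [add_assoc, ← List.sum_cons, ht.sum_eq, ← cubicChar_mul, mul_inv_cancel_left]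
  have he₀ : ∀ c ∈ e, c ≠ 0 := (List.forall_mem_cons.1 ht.ne_zero).2
  match e with
  | [c] =>
    rw [List.sum_singleton] at hsum
    have hp : cubicChar p ≠ cubicChar x + cubicChar x := by simpa [hsum] using he₀
    rcases singleLinked_path ⟨hx, ht.head_of_length_eq_two rfl⟩ hp hxy
      ⟨hy, ht'.head_of_length_eq_two rfl⟩ with rfl | hlink | ⟨z, ⟨hz, hzx⟩, hxz, hzy⟩
    · exact .refl
    · exact .single (hlink.linked hx hy hxy hsum)
    · have hzy' := hzy.linked hz hy (hxy.trans hzx.symm) (hzx ▸ hsum)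
      exact .tail (.single (hxz.linked hx hz hzx hsum)) (hzx ▸ hzy')
  | [c, d] =>
    have hc : c ≠ 0 := he₀ c (by simp)
    have hd : d ≠ 0 := he₀ d (by simp)
    rw [List.sum_pair] at hsum
    have hpx : p ≠ x := fun h => ht.ne_one_of_length_eq_three rfl (by rw [h, inv_mul_cancel])
    have hpy : p ≠ y := fun h => ht'.ne_one_of_length_eq_three rfl (by rw [h, inv_mul_cancel])
    obtain ⟨z, ⟨hz, hzx⟩, hxz, hzy⟩ := pairLinked_path hx hy hxy hpx hpy
    have hzy' := hzy.linked hz hy (hxy.trans hzx.symm) hc hd (hzx ▸ hsum)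
    exact .tail (.single (hxz.linked hx hz hzx hc hd hsum)) (hzx ▸ hzy')
  | c :: d :: d' :: e => exact .single (linked_of_three_le hx hy hxy (by simp) he₀ hsum)

theorem hurwitzEquiv {e : List (ZMod 3)} {p : SL23} {l l' : List SL23}
    (h : TransvectionFactorization e p l) (h' : TransvectionFactorization e p l') :
    HurwitzEquiv l l' := by
  obtain he | he := h.two_le_length.eq_or_lt
  · exact h.hurwitzEquiv_of_length_eq_two h' he.symm
  obtain ⟨ε, e', he', hperm⟩ := exists_perm_cons_cons he h.ne_zero
  obtain ⟨x, t, hlx, hx, rfl, ht⟩ := (h.of_perm hperm).exists_hurwitzEquiv_cons he'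
  obtain ⟨y, t', hly, hy, hyx, ht'⟩ := (h'.of_perm hperm).exists_hurwitzEquiv_cons he'
  have hpath := reflTransGen_linked hx hy hyx he' ht ht'
  refine (hlx.trans ?_).trans hly.symm
  exact hurwitzEquiv_cons_of_reflTransGen_linked (fun h h' => h.hurwitzEquiv h') hpath ht ht'
termination_by e.length
decreasing_by
  simp [hperm.length_eq]

end TransvectionFactorization

end Factorizations

section Representation

theorem isPrimitiveRoot_ω : IsPrimitiveRoot ω 3 := by
  simpa [ω] using Complex.isPrimitiveRoot_exp 3 (by norm_num)

theorem ω_sq : ω ^ 2 = -1 - ω := by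
  have hsum : ∑ i ∈ Finset.range 3, ω ^ i = 0 := isPrimitiveRoot_ω.geom_sum_eq_zero (by norm_num)
  simp only [Finset.sum_range_succ, Finset.sum_range_zero, pow_zero, pow_one, zero_add] at hsum
  linear_combination hsum

theorem stdAddChar_one : ZMod.stdAddChar (1 : ZMod 3) = ω := by
  have h := ZMod.stdAddChar_coe (N := 3) 1
  rwa [Int.cast_one, Int.cast_one, mul_one] at h

theorem stdAddChar_neg_one : ZMod.stdAddChar (-1 : ZMod 3) = -1 - ω := by
  rw [show (-1 : ZMod 3) = 1 + 1 by decide, AddChar.map_add_eq_mul, stdAddChar_one, ← pow_two,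
    ω_sq]

/-- The quadratic character of `𝔽₃`, with values in `ℂ`. -/
def signChar : MulChar (ZMod 3) ℂ := (quadraticChar (ZMod 3)).ringHomComp (Int.castRingHom ℂ)

theorem signChar_neg_one : signChar (-1) = -1 := by
  have h : quadraticChar (ZMod 3) (-1) = -1 := by decide
  simp [signChar, MulChar.ringHomComp_apply, h]

/-- The action of the upper unitriangular matrix with entry `n` in the Weil representation. -/
def weilDiag (n : ZMod 3) : Matrix (Fin 2) (Fin 2) ℂ := !![1, 0; 0, ZMod.stdAddChar n]

/-- The action of the Weyl element in the Weil representation: the Fourier transform of even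
functions on `𝔽₃`, in a basis scaled so as to give `BMat` below. -/
def weilFourier : Matrix (Fin 2) (Fin 2) ℂ :=
  !![-(ω - ω ^ 2) / 3, -1; 2 / 3, (ω - ω ^ 2) / 3]

/-- The matrices of the even part of the Weil representation of `SL(2, 𝔽₃)`, read off from the
Bruhat decomposition. -/
def weilMat (g : SL23) : Matrix (Fin 2) (Fin 2) ℂ :=
  if g 1 0 = 0 then signChar (g 0 0) • weilDiag (g 0 0 * g 0 1)
  else signChar (g 1 0) • (weilDiag (g 0 0 * g 1 0) * weilFourier * weilDiag (g 1 1 * g 1 0))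

theorem weilDiag_zero : weilDiag 0 = 1 := by
  rw [weilDiag, AddChar.map_zero_eq_one, one_fin_two]

theorem weilDiag_add (m n : ZMod 3) : weilDiag (m + n) = weilDiag m * weilDiag n := by
  simp [weilDiag, AddChar.map_add_eq_mul]

theorem weilFourier_mul_self : weilFourier * weilFourier = -1 := by
  have h := ω_sq
  ext i j
  fin_cases i <;> fin_cases j <;> simp [weilFourier] <;> grind

theorem weilFourier_mul_weilDiag_mul_weilFourier {n : ZMod 3} (hn : n ≠ 0) :
    weilFourier * weilDiag n * weilFourier =
      signChar n • (weilDiag (-n) * weilFourier * weilDiag (-n)) := by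
  have h := ω_sq
  obtain rfl | rfl : n = 1 ∨ n = -1 := by revert n; decide
  all_goals
    ext i j
    fin_cases i <;> fin_cases j <;>
      simp [weilFourier, weilDiag, stdAddChar_one, stdAddChar_neg_one, signChar_neg_one] <;>
      grind

theorem weilMat_of_eq_zero {g : SL23} (hg : g 1 0 = 0) :
    weilMat g = signChar (g 0 0) • weilDiag (g 0 0 * g 0 1) :=
  if_pos hg

theorem weilMat_of_ne_zero {g : SL23} (hg : g 1 0 ≠ 0) : weilMat g =
    signChar (g 1 0) • (weilDiag (g 0 0 * g 1 0) * weilFourier * weilDiag (g 1 1 * g 1 0)) :=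
  if_neg hg

theorem weilMat_one : weilMat 1 = 1 := by
  simp [weilMat, weilDiag_zero]

theorem weilMat_neg_one : weilMat (-1) = -1 := by
  simp [weilMat, weilDiag_zero, signChar_neg_one]

theorem weilMat_mul_of_left_eq_zero {g h : SL23} (hg : g 1 0 = 0) :
    weilMat (g * h) = weilMat g * weilMat h := by
  by_cases hh : h 1 0 = 0
  · have hprod : ∀ g h : SL23, g 1 0 = 0 → h 1 0 = 0 → (g * h) 1 0 = 0 ∧
        (g * h) 0 0 = g 0 0 * h 0 0 ∧
        (g * h) 0 0 * (g * h) 0 1 = g 0 0 * g 0 1 + h 0 0 * h 0 1 := by decide +kernel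
    obtain ⟨hgh, hsign, hdiag⟩ := hprod g h hg hh
    rw [weilMat_of_eq_zero hgh, hdiag, hsign, weilMat_of_eq_zero hg, weilMat_of_eq_zero hh,
      map_mul, weilDiag_add, smul_mul_smul_comm]
  · have hprod : ∀ g h : SL23, g 1 0 = 0 → h 1 0 ≠ 0 → (g * h) 1 0 ≠ 0 ∧
        (g * h) 0 0 * (g * h) 1 0 = g 0 0 * g 0 1 + h 0 0 * h 1 0 ∧
        (g * h) 1 1 * (g * h) 1 0 = h 1 1 * h 1 0 ∧
        (g * h) 1 0 = g 0 0 * h 1 0 := by decide +kernel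
    obtain ⟨hgh, hdiag, hdiag', hsign⟩ := hprod g h hg hh
    rw [weilMat_of_ne_zero hgh, hdiag, hdiag', hsign, weilMat_of_eq_zero hg,
      weilMat_of_ne_zero hh, map_mul, weilDiag_add, smul_mul_smul_comm]
    simp only [Matrix.mul_assoc]

theorem weilMat_mul_of_right_eq_zero {g h : SL23} (hg : g 1 0 ≠ 0) (hh : h 1 0 = 0) :
    weilMat (g * h) = weilMat g * weilMat h := by
  have hprod : ∀ g h : SL23, g 1 0 ≠ 0 → h 1 0 = 0 → (g * h) 1 0 ≠ 0 ∧
      (g * h) 0 0 * (g * h) 1 0 = g 0 0 * g 1 0 ∧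
      (g * h) 1 1 * (g * h) 1 0 = g 1 1 * g 1 0 + h 0 0 * h 0 1 ∧
      (g * h) 1 0 = g 1 0 * h 0 0 := by decide +kernel
  obtain ⟨hgh, hdiag, hdiag', hsign⟩ := hprod g h hg hh
  rw [weilMat_of_ne_zero hgh, hdiag, hdiag', hsign, weilMat_of_ne_zero hg,
    weilMat_of_eq_zero hh, map_mul, weilDiag_add, smul_mul_smul_comm]
  simp only [Matrix.mul_assoc]

theorem weilMat_mul_of_ne_zero {g h : SL23} (hg : g 1 0 ≠ 0) (hh : h 1 0 ≠ 0) :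
    weilMat (g * h) = weilMat g * weilMat h := by
  have hmul : weilMat g * weilMat h = signChar (g 1 0 * h 1 0) • (weilDiag (g 0 0 * g 1 0) *
      (weilFourier * weilDiag (g 1 1 * g 1 0 + h 0 0 * h 1 0) * weilFourier) *
      weilDiag (h 1 1 * h 1 0)) := by
    rw [weilMat_of_ne_zero hg, weilMat_of_ne_zero hh, map_mul, weilDiag_add, smul_mul_smul_comm]
    simp only [Matrix.mul_assoc]
  by_cases hgh : (g * h) 1 0 = 0
  · have hprod : ∀ g h : SL23, g 1 0 ≠ 0 → h 1 0 ≠ 0 → (g * h) 1 0 = 0 →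
        g 1 1 * g 1 0 + h 0 0 * h 1 0 = 0 ∧
        (g * h) 0 0 * (g * h) 0 1 = g 0 0 * g 1 0 + h 1 1 * h 1 0 ∧
        (g * h) 0 0 = -1 * (g 1 0 * h 1 0) := by decide +kernel
    obtain ⟨hmid, hdiag, hsign⟩ := hprod g h hg hh hgh
    rw [hmul, hmid, weilDiag_zero, Matrix.mul_one, weilFourier_mul_self, weilMat_of_eq_zero hgh,
      hdiag, hsign, map_mul, signChar_neg_one, weilDiag_add]
    simp
  · have hprod : ∀ g h : SL23, g 1 0 ≠ 0 → h 1 0 ≠ 0 → (g * h) 1 0 ≠ 0 →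
        g 1 1 * g 1 0 + h 0 0 * h 1 0 ≠ 0 ∧
        (g * h) 0 0 * (g * h) 1 0 = g 0 0 * g 1 0 + -(g 1 1 * g 1 0 + h 0 0 * h 1 0) ∧
        (g * h) 1 1 * (g * h) 1 0 = -(g 1 1 * g 1 0 + h 0 0 * h 1 0) + h 1 1 * h 1 0 ∧
        (g * h) 1 0 = g 1 0 * h 1 0 * (g 1 1 * g 1 0 + h 0 0 * h 1 0) := by decide +kernel
    obtain ⟨hmid, hdiag, hdiag', hsign⟩ := hprod g h hg hh hgh
    rw [hmul, weilFourier_mul_weilDiag_mul_weilFourier hmid, weilMat_of_ne_zero hgh, hdiag, hdiag',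
      hsign, map_mul signChar (g 1 0 * h 1 0), weilDiag_add, weilDiag_add, mul_smul]
    simp only [Matrix.mul_assoc, Matrix.mul_smul, Matrix.smul_mul]

theorem weilMat_mul (g h : SL23) : weilMat (g * h) = weilMat g * weilMat h := by
  by_cases hg : g 1 0 = 0
  · exact weilMat_mul_of_left_eq_zero hg
  by_cases hh : h 1 0 = 0
  · exact weilMat_mul_of_right_eq_zero hg hh
  · exact weilMat_mul_of_ne_zero hg hh

/-- The even part of the Weil representation of `SL(2, 𝔽₃)`. -/
def weilRep : SL23 →* GL (Fin 2) ℂ :=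
  MonoidHom.toHomUnits { toFun := weilMat, map_one' := weilMat_one, map_mul' := weilMat_mul }

theorem weilRep_injective : Function.Injective weilRep := by
  rw [injective_iff_map_eq_one]
  intro g hg
  replace hg : weilMat g = 1 := congrArg Units.val hg
  have hlower : g 1 0 = 0 := by
    by_contra h
    have hentry : weilMat g 0 1 = 0 := by rw [hg]; rfl
    rw [weilMat_of_ne_zero h] at hentry
    have hsign : signChar (g 1 0) ≠ 0 := ((Ne.isUnit h).map signChar).ne_zero
    have hchar : ZMod.stdAddChar (g 1 1 * g 1 0) ≠ 0 := by simp [ZMod.stdAddChar_apply]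
    simp [weilDiag, weilFourier, hsign, hchar] at hentry
  rw [weilMat_of_eq_zero hlower] at hg
  have hsign : signChar (g 0 0) = 1 := by simpa [weilDiag] using congrFun₂ hg 0 0
  have hchar : ZMod.stdAddChar (g 0 0 * g 0 1) = 1 := by
    simpa [weilDiag, hsign] using congrFun₂ hg 1 1
  have hdiag : g 0 0 ≠ -1 := by
    intro h
    rw [h, signChar_neg_one] at hsign
    norm_num at hsign
  have hoff : g 0 0 * g 0 1 = 0 :=
    ZMod.injective_stdAddChar (hchar.trans (AddChar.map_zero_eq_one _).symm)
  have eq_one_of_entries : ∀ g : SL23, g 1 0 = 0 → g 0 0 ≠ -1 → g 0 0 * g 0 1 = 0 → g = 1 := by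
    decide +kernel
  exact eq_one_of_entries g hlower hdiag hoff

/-- The elementary matrix that `weilEquiv` sends to the generator `AMat`. -/
def upperUnit : SL23 := ⟨!![1, 1; 0, 1], by decide⟩

/-- The elementary matrix that `weilEquiv` sends to the generator `BMat`. -/
def lowerUnit : SL23 := ⟨!![1, 0; -1, 1], by decide⟩

theorem weilRep_upperUnit : (weilRep upperUnit : Matrix (Fin 2) (Fin 2) ℂ) = AMat := by
  change weilMat upperUnit = AMat
  rw [weilMat_of_eq_zero rfl]
  simp [upperUnit, weilDiag, stdAddChar_one, AMat]

theorem weilRep_lowerUnit : (weilRep lowerUnit : Matrix (Fin 2) (Fin 2) ℂ) = BMat := by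
  change weilMat lowerUnit = BMat
  rw [weilMat_of_ne_zero (by decide)]
  have h := ω_sq
  ext i j
  fin_cases i <;> fin_cases j <;>
    simp [lowerUnit, weilDiag, weilFourier, stdAddChar_neg_one, signChar_neg_one, BMat] <;> grind

theorem closure_upperUnit_lowerUnit : Subgroup.closure {upperUnit, lowerUnit} = ⊤ := by
  have exists_word : ∀ g : SL23, ∃ i j k l : Fin 3, g = upperUnit ^ (i : ℕ) * lowerUnit ^ (j : ℕ) *
      upperUnit ^ (k : ℕ) * lowerUnit ^ (l : ℕ) := by
    decide +kernel
  have hu : upperUnit ∈ Subgroup.closure {upperUnit, lowerUnit} :=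
    Subgroup.subset_closure (by simp)
  have hl : lowerUnit ∈ Subgroup.closure {upperUnit, lowerUnit} :=
    Subgroup.subset_closure (by simp)
  refine eq_top_iff.2 fun g _ => ?_
  obtain ⟨i, j, k, l, rfl⟩ := exists_word g
  exact mul_mem (mul_mem (mul_mem (pow_mem hu _) (pow_mem hl _)) (pow_mem hu _)) (pow_mem hl _)

theorem range_weilRep : weilRep.range = G4 := by
  have hgen : {g : GL (Fin 2) ℂ | (g : Matrix (Fin 2) (Fin 2) ℂ) = AMat ∨
      (g : Matrix (Fin 2) (Fin 2) ℂ) = BMat} = weilRep '' {upperUnit, lowerUnit} := by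
    ext g
    simp only [Set.mem_ofPred_eq, Set.image_pair, Set.mem_insert_iff, Set.mem_singleton_iff,
      Units.ext_iff, weilRep_upperUnit, weilRep_lowerUnit]
  rw [G4, hgen, ← MonoidHom.map_closure, closure_upperUnit_lowerUnit, MonoidHom.range_eq_map]

/-- The exceptional isomorphism of `SL(2, 𝔽₃)` with `G4`. -/
def weilEquiv : SL23 ≃* G4 :=
  (MonoidHom.ofInjective weilRep_injective).trans (MulEquiv.subgroupCongr range_weilRep)

theorem mat_weilEquiv (g : SL23) : mat (weilEquiv g) = weilMat g := rfl

theorem exists_pow_mulVec_eq {n K : Type*} [Fintype n] [DecidableEq n] [Field K]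
    {N : Matrix n n K} {ζ : K} (h : (N - ζ • (1 : Matrix n n K)).det = 0) :
    ∃ v ≠ 0, ∀ m : ℕ, N ^ m *ᵥ v = ζ ^ m • v := by
  obtain ⟨v, hv, hker⟩ := exists_mulVec_eq_zero_iff.2 h
  rw [sub_mulVec, smul_mulVec, one_mulVec, sub_eq_zero] at hker
  refine ⟨v, hv, fun m => ?_⟩
  induction m with
  | zero => simp
  | succ m ih => rw [pow_succ', ← mulVec_mulVec, ih, mulVec_smul, hker, smul_smul, pow_succ]

theorem weilMat_pow (g : SL23) (m : ℕ) : weilMat (g ^ m) = weilMat g ^ m :=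
  congrArg Units.val (map_pow weilRep g m)

theorem IsReflection.isTransvection {g : SL23} (h : IsReflection (weilEquiv g)) :
    IsTransvection g := by
  obtain ⟨hone, hdet⟩ := h
  obtain ⟨v, hv, hpow⟩ := exists_pow_mulVec_eq (N := mat (weilEquiv g)) (ζ := 1)
    (by rwa [one_smul])
  have hneg (m : ℕ) : g ^ m ≠ -1 := by
    intro hg
    have hm := hpow m
    rw [mat_weilEquiv, ← weilMat_pow, hg, weilMat_neg_one, neg_mulVec, one_mulVec, one_pow,
      one_smul] at hm
    exact hv (self_eq_neg.1 hm.symm)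
  have classify : ∀ g : SL23, g = 1 ∨ g ^ 2 = -1 ∨ g ^ 3 = -1 ∨ IsTransvection g := by
    decide +kernel
  rcases classify g with rfl | hg | hg | hg
  · exact absurd (map_one weilEquiv) hone
  · exact absurd hg (hneg 2)
  · exact absurd hg (hneg 3)
  · exact hg

theorem IsReflection.pow_three {r : G4} (h : IsReflection r) : r ^ 3 = 1 := by
  obtain ⟨g, rfl⟩ := weilEquiv.surjective r
  rw [← map_pow, h.isTransvection.pow_three, map_one]

theorem IsCoxeter.pow_three_ne_one {c : G4} (hc : IsCoxeter c) : c ^ 3 ≠ 1 := by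
  intro hone
  obtain ⟨ζ, hζ, hdet⟩ := hc
  obtain ⟨v, hv, hpow⟩ := exists_pow_mulVec_eq hdet
  have hmat : mat c ^ 3 = 1 := congrArg mat hone
  have hζv : (ζ ^ 3 - 1) • v = 0 := by
    rw [sub_smul, ← hpow 3, hmat, one_mulVec, one_smul, sub_self]
  rcases smul_eq_zero.1 hζv with hζ₃ | hv₀
  · have := hζ.dvd_of_pow_eq_one 3 (sub_eq_zero.1 hζ₃)
    omega
  · exact hv hv₀

theorem IsCoxeter.noncommuting {l : List G4} (hl : ∀ r ∈ l, IsReflection r)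
    (hc : IsCoxeter l.prod) : Noncommuting l := by
  by_contra hcomm
  exact hc.pow_three_ne_one
    (prod_pow_eq_one_of_not_noncommuting (fun r hr => (hl r hr).pow_three) hcomm)

/-- The conjugacy class of a reflection of `G4`, recorded by the character `cubicChar` of the
isomorphic group `SL(2, 𝔽₃)`. -/
def reflectionClass (r : G4) : ZMod 3 := cubicChar (weilEquiv.symm r)

theorem TransvectionFactorization.of_isReflection {l : List G4} (hl : ∀ r ∈ l, IsReflection r)
    (hnc : Noncommuting l) :
    TransvectionFactorization (l.map reflectionClass) (weilEquiv.symm l.prod)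
      (l.map weilEquiv.symm) where
  isTransvection := by
    refine List.forall_mem_map.2 fun r hr => IsReflection.isTransvection ?_
    rw [MulEquiv.apply_symm_apply]
    exact hl r hr
  noncommuting := hnc.map weilEquiv.symm.injective
  prod_eq := (map_list_prod weilEquiv.symm l).symm
  perm := by rw [List.map_map]; rfl

theorem reflectionClass_eq_of_isConj {r s : G4} (h : IsConj r s) :
    reflectionClass r = reflectionClass s := by
  obtain ⟨g, rfl⟩ := isConj_iff.1 h
  simpa [reflectionClass] using (cubicChar_conj (weilEquiv.symm r) (weilEquiv.symm g)⁻¹).symm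

end Representation

theorem g4_hurwitz_transitive_up_to_classes_general {k : ℕ} {t t' : Fin k → G4}
    (ht : ∀ i, IsReflection (t i)) (ht' : ∀ i, IsReflection (t' i))
    (hnc : Noncommuting (List.ofFn t)) (hnc' : Noncommuting (List.ofFn t'))
    (hp : (List.ofFn t).prod = (List.ofFn t').prod) :
    SameHurwitzOrbit t t' ↔ ∃ σ : Equiv.Perm (Fin k), ∀ i, IsConj (t i) (t' (σ i)) := by
  refine ⟨SameHurwitzOrbit.exists_perm_isConj, fun ⟨σ, hσ⟩ => ?_⟩
  have hfac := TransvectionFactorization.of_isReflection (List.forall_mem_ofFn_iff.2 ht) hnc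
  have hfac' := TransvectionFactorization.of_isReflection (List.forall_mem_ofFn_iff.2 ht') hnc'
  have hclasses : ((List.ofFn t').map reflectionClass).Perm
      ((List.ofFn t).map reflectionClass) := by
    have hcomp : reflectionClass ∘ t = (reflectionClass ∘ t') ∘ σ :=
      funext fun i => reflectionClass_eq_of_isConj (hσ i)
    rw [List.map_ofFn, List.map_ofFn, hcomp]
    exact (Equiv.Perm.ofFn_comp_perm σ _).symm
  have hequiv := hfac.hurwitzEquiv (hp ▸ hfac'.of_perm hclasses)
  rw [List.map_ofFn, List.map_ofFn] at hequiv
  simpa [Function.comp_def] using hequiv.sameHurwitzOrbit.map weilEquiv.toMonoidHom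

theorem g4_hurwitz_transitive_up_to_classes
    (c : G4) (hc : IsCoxeter c) (k : ℕ) (hk : 2 ≤ k)
    (t t' : Fin k → G4)
    (ht : ∀ i, IsReflection (t i)) (ht' : ∀ i, IsReflection (t' i))
    (hp : (List.ofFn t).prod = c) (hp' : (List.ofFn t').prod = c) :
    SameHurwitzOrbit t t' ↔
      ∃ σ : Equiv.Perm (Fin k), ∀ i, IsConj (t i) (t' (σ i)) :=
  g4_hurwitz_transitive_up_to_classes_general ht ht'
    (IsCoxeter.noncommuting (List.forall_mem_ofFn_iff.2 ht) (hp ▸ hc))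
    (IsCoxeter.noncommuting (List.forall_mem_ofFn_iff.2 ht') (hp' ▸ hc)) (hp.trans hp'.symm)
end
end

section
/- Let t₁ ∈ R₁ and t₂ ∈ R₂ be reflections of G4 with t₂ ≠ t₁² (i.e., t₁ and t₂ are not inverses of each other). Then the Hurwitz orbit of the pair (t₁, t₂) has exactly four elements; exactly four distinct reflections appear as entries of pairs in this orbit, namely t₁, t₁′ ∈ R₁ and t₂, t₂′ ∈ R₂; and moreover R₁ = {t₁, t₁′, t₂², t₂′²} (so in particular t₁² ≠ t₂′, t₁′² ≠ t₂, and t₁′² ≠ t₂′). -/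
noncomputable section

open Matrix Complex

/-!
The product `p = t₁t₂` has determinant `1`, so it lies in the quaternion subgroup `Q₈` of `G4`;
a trace computation rules out `p = -1`, hence `p² = -1` is central. Applying the Hurwitz move
twice conjugates a pair by its product, so the orbit of `(t₁, t₂)` closes up after four moves, and
its entries are `t₁`, `t₂` and their conjugates `t₁'`, `t₂'` by `p`. The elements `t₁`, `t₁'`,
`t₂⁻¹`, `t₂'⁻¹` of `R1` are pairwise distinct. On the other hand an element of determinant `ω` is
`AMat * q` with `q ∈ Q₈`, and at most one of `AMat * q`, `AMat * -q` has the trace `1 + ω` of a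
reflection, so `R1` has at most four elements.
-/

theorem ncard_eq_four_of_nodup {α : Type*} {a b c d : α} (h : [a, b, c, d].Nodup) :
    ({a, b, c, d} : Set α).ncard = 4 := by
  simp only [List.nodup_cons, List.mem_cons, List.not_mem_nil, not_or] at h
  exact Set.ncard_eq_four.mpr ⟨a, b, c, d, by tauto⟩

section OrbitsOfPermutations

variable {α : Type*}

theorem eqvGen_iff_sameCycle (σ : Equiv.Perm α) (x y : α) :
    Relation.EqvGen (fun u v => σ u = v) x y ↔ σ.SameCycle x y := by
  constructor
  · intro h
    induction h with
    | rel u v huv => exact ⟨1, by simpa using huv⟩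
    | refl u => exact Equiv.Perm.SameCycle.refl σ u
    | symm u v _ ih => exact ih.symm
    | trans u v w _ _ ihuv ihvw => exact ihuv.trans ihvw
  · rintro ⟨n, rfl⟩
    induction n with
    | zero => exact Relation.EqvGen.refl _
    | succ n ih =>
      refine ih.trans _ _ _ (Relation.EqvGen.rel _ _ ?_)
      rw [add_comm, _root_.zpow_one_add, Equiv.Perm.mul_apply]
    | pred n ih =>
      refine ih.trans _ _ _ (Relation.EqvGen.rel _ _ ?_).symm
      rw [← Equiv.Perm.mul_apply, ← _root_.zpow_one_add, add_sub_cancel]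

theorem sameCycle_iff_exists_lt_of_pow_apply_eq {σ : Equiv.Perm α} {n : ℕ} {x : α} (hn : 0 < n)
    (hx : (σ ^ n) x = x) (y : α) : σ.SameCycle x y ↔ ∃ i < n, (σ ^ i) x = y := by
  constructor
  · rintro ⟨z, rfl⟩
    have hn' : (0 : ℤ) < n := by exact_mod_cast hn
    obtain ⟨i, hi⟩ := Int.eq_ofNat_of_zero_le (Int.emod_nonneg z hn'.ne')
    have hfix : ((σ ^ n) ^ (z / n)) x = x :=
      Function.IsFixedPt.perm_zpow (e := σ ^ n) hx (z / n)
    refine ⟨i, by have := Int.emod_lt_of_pos z hn'; omega, ?_⟩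
    calc (σ ^ i) x = (σ ^ (z % n)) (((σ ^ n) ^ (z / n)) x) := by rw [hfix, hi, zpow_natCast]
      _ = (σ ^ z) x := by
        rw [← Equiv.Perm.mul_apply, ← zpow_natCast σ n, ← _root_.zpow_mul, ← _root_.zpow_add,
          Int.emod_add_mul_ediv]
  · rintro ⟨i, -, rfl⟩
    exact ⟨i, by rw [zpow_natCast]⟩

end OrbitsOfPermutations

section HurwitzPairs

variable {G : Type*} [Group G]

/-- The Hurwitz move `(a, b) ↦ (b, b⁻¹ab)` as a permutation of the pairs of group elements. -/
def hurwitzPerm : Equiv.Perm (Fin 2 → G) where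
  toFun s := ![s 1, (s 1)⁻¹ * s 0 * s 1]
  invFun s := ![s 0 * s 1 * (s 0)⁻¹, s 0]
  left_inv s := by ext j; fin_cases j <;> simp [mul_assoc]
  right_inv s := by ext j; fin_cases j <;> simp [mul_assoc]

theorem isHurwitzMove_iff_hurwitzPerm_eq (s t : Fin 2 → G) :
    IsHurwitzMove s t ↔ hurwitzPerm s = t := by
  constructor
  · rintro ⟨i, hi, hfst, hsnd, -⟩
    obtain rfl : i = 0 := by omega
    ext j
    fin_cases j
    · exact hfst.symm
    · exact hsnd.symm
  · rintro rfl
    exact ⟨0, by norm_num, rfl, rfl, fun j _ _ => by omega⟩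

theorem sameHurwitzOrbit_iff_sameCycle (s t : Fin 2 → G) :
    SameHurwitzOrbit s t ↔ hurwitzPerm.SameCycle s t := by
  rw [← eqvGen_iff_sameCycle, SameHurwitzOrbit]
  simp only [← isHurwitzMove_iff_hurwitzPerm_eq]

theorem hurwitzPerm_pair (a b : G) :
    hurwitzPerm ![a, b] = ![b, MulAut.conj (a * b)⁻¹ a] := by
  simp [hurwitzPerm, mul_assoc]

theorem hurwitzPerm_hurwitzPerm_pair (a b : G) :
    hurwitzPerm (hurwitzPerm ![a, b]) =
      ![MulAut.conj (a * b)⁻¹ a, MulAut.conj (a * b)⁻¹ b] := by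
  simp [hurwitzPerm, mul_assoc]

theorem conj_inv_conj_inv_of_commute_sq {p x : G} (h : Commute (p ^ 2) x) :
    MulAut.conj p⁻¹ (MulAut.conj p⁻¹ x) = x := by
  calc MulAut.conj p⁻¹ (MulAut.conj p⁻¹ x) = (p ^ 2)⁻¹ * (x * p ^ 2) := by
        simp [sq, mul_assoc]
    _ = x := by rw [← h.eq, inv_mul_cancel_left]

theorem commute_sq_mul_right {a b : G} (h : Commute ((a * b) ^ 2) a) :
    Commute ((a * b) ^ 2) b := by
  simpa using h.inv_right.mul_right (Commute.pow_self (a * b) 2)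

theorem hurwitzPerm_pow_four_pair {a b : G} (h : Commute ((a * b) ^ 2) a) :
    (hurwitzPerm ^ 4) ![a, b] = ![a, b] := by
  have hprod : MulAut.conj (a * b)⁻¹ a * MulAut.conj (a * b)⁻¹ b = a * b := by
    simp [mul_assoc]
  calc (hurwitzPerm ^ 4) ![a, b]
      = hurwitzPerm (hurwitzPerm (hurwitzPerm (hurwitzPerm ![a, b]))) := rfl
    _ = ![a, b] := by
      rw [hurwitzPerm_hurwitzPerm_pair a b, hurwitzPerm_hurwitzPerm_pair, hprod,
        conj_inv_conj_inv_of_commute_sq h,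
        conj_inv_conj_inv_of_commute_sq (commute_sq_mul_right h)]

theorem setOf_sameHurwitzOrbit_pair {a b : G} (h : Commute ((a * b) ^ 2) a) :
    {s | SameHurwitzOrbit ![a, b] s} =
      {![a, b], ![b, MulAut.conj (a * b)⁻¹ a],
        ![MulAut.conj (a * b)⁻¹ a, MulAut.conj (a * b)⁻¹ b], ![MulAut.conj (a * b)⁻¹ b, a]} := by
  have hpow_one : (hurwitzPerm ^ 1) ![a, b] = ![b, MulAut.conj (a * b)⁻¹ a] :=
    hurwitzPerm_pair a b
  have hpow_two : (hurwitzPerm ^ 2) ![a, b] =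
      ![MulAut.conj (a * b)⁻¹ a, MulAut.conj (a * b)⁻¹ b] := hurwitzPerm_hurwitzPerm_pair a b
  have hpow_three : (hurwitzPerm ^ 3) ![a, b] = ![MulAut.conj (a * b)⁻¹ b, a] := by
    rw [pow_succ', Equiv.Perm.mul_apply, hpow_two, hurwitzPerm_pair, ← map_mul,
      MulAut.conj_apply _ (a * b), inv_inv, inv_mul_cancel, one_mul,
      conj_inv_conj_inv_of_commute_sq h]
  ext s
  rw [Set.mem_ofPred_eq, sameHurwitzOrbit_iff_sameCycle,
    sameCycle_iff_exists_lt_of_pow_apply_eq four_pos (hurwitzPerm_pow_four_pair h)]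
  constructor
  · rintro ⟨i, hi, rfl⟩
    interval_cases i
    exacts [Or.inl rfl, Or.inr (Or.inl hpow_one), Or.inr (Or.inr (Or.inl hpow_two)),
      Or.inr (Or.inr (Or.inr hpow_three))]
  · rintro (rfl | rfl | rfl | rfl)
    exacts [⟨0, by norm_num, rfl⟩, ⟨1, by norm_num, hpow_one⟩, ⟨2, by norm_num, hpow_two⟩,
      ⟨3, by norm_num, hpow_three⟩]

theorem setOf_appears_pair {a b : G} (h : Commute ((a * b) ^ 2) a) :
    {r | Appears r ![a, b]} =
      {a, MulAut.conj (a * b)⁻¹ a, b, MulAut.conj (a * b)⁻¹ b} := by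
  have horbit := Set.ext_iff.mp (setOf_sameHurwitzOrbit_pair h)
  simp only [Set.mem_ofPred_eq] at horbit
  ext r
  constructor
  · rintro ⟨s, hs, j, rfl⟩
    rcases (horbit s).mp hs with rfl | rfl | rfl | rfl <;> fin_cases j <;> simp
  · rintro (rfl | rfl | rfl | rfl)
    exacts [⟨_, (horbit _).mpr (.inl rfl), 0, rfl⟩,
      ⟨_, (horbit _).mpr (.inr (.inl rfl)), 1, rfl⟩,
      ⟨_, (horbit _).mpr (.inl rfl), 1, rfl⟩,
      ⟨_, (horbit _).mpr (.inr (.inr (.inl rfl))), 1, rfl⟩]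

theorem nodup_conj_pair {a b c : G} (h : Commute ((a * b) ^ 2) a) (hab : ¬Commute a b)
    (hac : ¬Commute a c) (hbc : Commute b c) :
    [a, MulAut.conj (a * b)⁻¹ a, c, MulAut.conj (a * b)⁻¹ c].Nodup := by
  have conj_a : MulAut.conj (a * b)⁻¹ a = b⁻¹ * a * b := by simp [mul_assoc]
  have a_ne_c : a ≠ c := fun heq => hac (heq ▸ Commute.refl a)
  have conj_a_ne_a : MulAut.conj (a * b)⁻¹ a ≠ a := fun heq => hab <| by
    rw [conj_a, mul_assoc, inv_mul_eq_iff_eq_mul] at heq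
    exact heq
  have conj_a_ne_c : MulAut.conj (a * b)⁻¹ a ≠ c := fun heq => a_ne_c <| by
    rw [conj_a, mul_assoc, inv_mul_eq_iff_eq_mul, hbc.eq] at heq
    exact mul_right_cancel heq
  have conj_c_ne_c : MulAut.conj (a * b)⁻¹ c ≠ c := fun heq => hac <| by
    have hc : Commute c (a * b) := by
      rw [MulAut.conj_apply, inv_inv, mul_assoc, inv_mul_eq_iff_eq_mul] at heq
      exact heq
    simpa using (hc.mul_right hbc.symm.inv_right).symm
  have conj_c_ne_a : MulAut.conj (a * b)⁻¹ c ≠ a := fun heq => conj_a_ne_c <| by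
    rw [← (MulAut.conj (a * b)⁻¹).injective.eq_iff, conj_inv_conj_inv_of_commute_sq h, heq]
  have conj_a_ne_conj_c := (MulAut.conj (a * b)⁻¹).injective.ne a_ne_c
  simp only [List.nodup_cons, List.mem_cons, List.not_mem_nil, not_or]
  exact ⟨⟨conj_a_ne_a.symm, a_ne_c, conj_c_ne_a.symm, not_false⟩,
    ⟨conj_a_ne_c, conj_a_ne_conj_c, not_false⟩, ⟨conj_c_ne_c.symm, not_false⟩, not_false,
    List.nodup_nil⟩

theorem ncard_setOf_sameHurwitzOrbit_pair {a b : G} (h : Commute ((a * b) ^ 2) a)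
    (hab : ¬Commute a b) : {s | SameHurwitzOrbit ![a, b] s}.ncard = 4 := by
  rw [setOf_sameHurwitzOrbit_pair h]
  refine ncard_eq_four_of_nodup (List.Nodup.of_map (fun s => s 0) ?_)
  exact (List.Perm.swap _ _ _).cons _ |>.nodup_iff.mp
    (nodup_conj_pair h hab hab (Commute.refl b))

theorem not_commute_of_pow_three_eq_one {a b : G} (ha : a ^ 3 = 1) (hb : b ^ 3 = 1)
    (hab : (a * b) ^ 4 = 1) (hne : a * b ≠ 1) : ¬Commute a b := by
  intro hcomm
  have hcube : (a * b) ^ 3 = 1 := by rw [hcomm.mul_pow, ha, hb, one_mul]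
  exact hne (by rwa [pow_succ, hcube, one_mul] at hab)

end HurwitzPairs

section TwoByTwoMatrices

variable {R : Type*} [CommRing R] {M : Matrix (Fin 2) (Fin 2) R}

theorem trace_eq_one_add_det_of_det_sub_one_eq_zero (h : (M - 1).det = 0) :
    M.trace = 1 + M.det := by
  simp only [det_fin_two, Matrix.sub_apply, one_apply_eq, one_apply_ne zero_ne_one,
    one_apply_ne one_ne_zero, trace_fin_two] at h ⊢
  linear_combination -h

theorem pow_three_eq_one_of_trace_eq_one_add_det (h : M.trace = 1 + M.det)
    (hdet : 1 + M.det + M.det ^ 2 = 0) : M ^ 3 = 1 := by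
  have cayley_hamilton : M ^ 2 = (1 + M.det) • M - M.det • 1 := by
    rw [← h]
    ext i j
    fin_cases i <;> fin_cases j <;> simp [sq, mul_apply, trace_fin_two, det_fin_two] <;> ring
  calc M ^ 3 = M ^ 2 * M := pow_succ M 2
    _ = (1 + M.det) • M ^ 2 - M.det • M := by
        rw [cayley_hamilton, sub_mul, smul_mul_assoc, smul_mul_assoc, one_mul, ← sq,
          cayley_hamilton]
    _ = (1 + M.det + M.det ^ 2) • (M - 1) + 1 := by rw [cayley_hamilton]; module
    _ = 1 := by rw [hdet, zero_smul, zero_add]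

end TwoByTwoMatrices

section QuaternionGroup

theorem one_add_ω_add_ω_sq : 1 + ω + ω ^ 2 = 0 := by
  simpa [Finset.sum_range_succ] using isPrimitiveRoot_ω.geom_sum_eq_zero (by norm_num)

theorem ω_pow_three : ω ^ 3 = 1 := isPrimitiveRoot_ω.pow_eq_one

theorem ω_pow_pow_three (k : ℕ) : (ω ^ k) ^ 3 = 1 := by
  rw [pow_right_comm, ω_pow_three, one_pow]

/-- The three quaternion units `i, j, k` (indexed modulo `3`) inside `G4`: the conjugates of
`AMat⁻¹ * BMat` by the powers of `AMat`. -/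
def quat (k : ℕ) : Matrix (Fin 2) (Fin 2) ℂ :=
  !![(1 + 2 * ω) / 3, ω ^ k; -2 / 3 * ω ^ (2 * k), -(1 + 2 * ω) / 3]

theorem quat_add_three (k : ℕ) : quat (k + 3) = quat k := by
  simp [quat, mul_add, pow_add, pow_mul ω 3 2, ω_pow_three]

theorem quat_mod_three (k : ℕ) : quat (k % 3) = quat k :=
  Function.Periodic.map_mod_nat quat_add_three k

theorem quat_mul_self (k : ℕ) : quat k * quat k = -1 := by
  have hω := one_add_ω_add_ω_sq
  have hk := ω_pow_pow_three k
  ext i j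
  fin_cases i <;> fin_cases j <;> simp [quat, mul_apply, pow_mul'] <;> grind

theorem quat_mul_quat_succ (k : ℕ) : quat k * quat (k + 1) = quat (k + 2) := by
  have hω := one_add_ω_add_ω_sq
  have hk := ω_pow_pow_three k
  ext i j
  fin_cases i <;> fin_cases j <;> simp [quat, mul_apply, pow_mul', pow_add] <;> grind

theorem quat_succ_mul_quat (k : ℕ) : quat (k + 1) * quat k = -quat (k + 2) := by
  have hω := one_add_ω_add_ω_sq
  have hk := ω_pow_pow_three k
  ext i j
  fin_cases i <;> fin_cases j <;> simp [quat, mul_apply, pow_mul', pow_add] <;> grind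

theorem quat_mul_AMat (k : ℕ) : quat k * AMat = AMat * quat (k + 1) := by
  have hω := one_add_ω_add_ω_sq
  ext i j
  fin_cases i <;> fin_cases j <;> simp [quat, AMat, mul_apply, pow_mul', pow_add] <;> grind

theorem AMat_mul_quat_two : AMat * quat 2 = BMat := by
  have hω := one_add_ω_add_ω_sq
  ext i j
  fin_cases i <;> fin_cases j <;> simp [quat, AMat, BMat, mul_apply] <;> grind

theorem AMat_pow (m : ℕ) : AMat ^ m = !![1, 0; 0, ω ^ m] := by
  induction m with
  | zero => simp [one_fin_two]
  | succ m ih => rw [pow_succ, ih]; simp [AMat, pow_succ]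

/-- The elements `1, i, j, k`, which represent the quaternion group modulo `±1`. -/
def quatBasis : Set (Matrix (Fin 2) (Fin 2) ℂ) := insert 1 (Set.range quat)

theorem encard_quatBasis_le : quatBasis.encard ≤ 4 := by
  have hrange : Set.range quat ⊆ quat '' (Finset.range 3) := by
    rintro _ ⟨k, rfl⟩
    exact ⟨k % 3, by simp [Nat.mod_lt], quat_mod_three k⟩
  calc quatBasis.encard ≤ (Set.range quat).encard + 1 := Set.encard_insert_le _ _
    _ ≤ (Finset.range 3 : Set ℕ).encard + 1 := by
      gcongr
      exact (Set.encard_le_encard hrange).trans (Set.encard_image_le _ _)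
    _ = 4 := by rw [Set.encard_coe_eq_coe_finsetCard]; norm_num

theorem quat_mul_quat_mem (j k : ℕ) :
    quat j * quat k ∈ quatBasis ∨ -(quat j * quat k) ∈ quatBasis := by
  obtain ⟨r, hr, hj⟩ : ∃ r < 3, quat j = quat (k + r) :=
    ⟨(j + 2 * k) % 3, Nat.mod_lt _ three_pos, by
      rw [← quat_mod_three j, ← quat_mod_three (k + _)]; congr 1; omega⟩
  rw [hj]
  interval_cases r
  · simp [quat_mul_self, quatBasis]
  · simp [quat_succ_mul_quat, quatBasis]
  · have : quat (k + 2) * quat k = quat (k + 2 + 2) := by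
      rw [← quat_add_three k]
      exact quat_mul_quat_succ (k + 2)
    simp [this, quatBasis]

/-- The quaternion group `Q₈ = {±1, ±i, ±j, ±k}`, as a monoid of matrices. -/
def quatGroup : Submonoid (Matrix (Fin 2) (Fin 2) ℂ) where
  carrier := {q | q ∈ quatBasis ∨ -q ∈ quatBasis}
  one_mem' := Or.inl (Set.mem_insert _ _)
  mul_mem' := by
    have basis_mul : ∀ {x y}, x ∈ quatBasis → y ∈ quatBasis →
        x * y ∈ quatBasis ∨ -(x * y) ∈ quatBasis := by
      rintro _ _ (rfl | ⟨j, rfl⟩) (rfl | ⟨k, rfl⟩)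
      · simp [quatBasis]
      · simp [quatBasis]
      · simp [quatBasis]
      · exact quat_mul_quat_mem j k
    rintro x y (hx | hx) (hy | hy)
    · exact basis_mul hx hy
    · simpa [or_comm] using basis_mul hx hy
    · simpa [or_comm] using basis_mul hx hy
    · simpa using basis_mul hx hy

theorem exists_mul_AMat_eq {q : Matrix (Fin 2) (Fin 2) ℂ} (hq : q ∈ quatGroup) :
    ∃ q' ∈ quatGroup, q * AMat = AMat * q' := by
  have of_basis : ∀ {x}, x ∈ quatBasis → ∃ y ∈ quatBasis, x * AMat = AMat * y := by
    rintro _ (rfl | ⟨k, rfl⟩)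
    · exact ⟨1, Set.mem_insert _ _, by simp⟩
    · exact ⟨quat (k + 1), by simp [quatBasis], quat_mul_AMat k⟩
  rcases hq with hq | hq
  · obtain ⟨y, hy, hmul⟩ := of_basis hq
    exact ⟨y, Or.inl hy, hmul⟩
  · obtain ⟨y, hy, hmul⟩ := of_basis hq
    exact ⟨-y, Or.inr (by simpa using hy), by rw [mul_neg, ← hmul, neg_mul, neg_neg]⟩

theorem exists_mul_AMat_mul_eq {M r : Matrix (Fin 2) (Fin 2) ℂ}
    (hM : ∃ m : ℕ, ∃ q ∈ quatGroup, M = AMat ^ m * q) (hr : r ∈ quatGroup) :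
    ∃ m : ℕ, ∃ q ∈ quatGroup, M * (AMat * r) = AMat ^ m * q := by
  obtain ⟨m, q, hq, rfl⟩ := hM
  obtain ⟨q', hq', hmul⟩ := exists_mul_AMat_eq hq
  refine ⟨m + 1, q' * r, mul_mem hq' hr, ?_⟩
  calc AMat ^ m * q * (AMat * r) = AMat ^ m * (q * AMat) * r := by simp only [mul_assoc]
    _ = AMat ^ (m + 1) * (q' * r) := by rw [hmul, pow_succ]; simp only [mul_assoc]

theorem det_eq_one_of_mem_quatGroup {q : Matrix (Fin 2) (Fin 2) ℂ} (hq : q ∈ quatGroup) :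
    q.det = 1 := by
  have of_basis : ∀ {x}, x ∈ quatBasis → x.det = 1 := by
    rintro _ (rfl | ⟨k, rfl⟩)
    · exact det_one
    · have hω := one_add_ω_add_ω_sq
      have hk := ω_pow_pow_three k
      simp only [quat, det_fin_two_of, pow_mul']
      grind
  rcases hq with hq | hq
  · exact of_basis hq
  · simpa [det_neg] using of_basis hq

theorem sq_eq_neg_one_of_mem_quatGroup {q : Matrix (Fin 2) (Fin 2) ℂ} (hq : q ∈ quatGroup)
    (hone : q ≠ 1) (hneg_one : q ≠ -1) : q ^ 2 = -1 := by
  rcases hq with (rfl | ⟨k, rfl⟩) | (hq | ⟨k, hk⟩)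
  · exact absurd rfl hone
  · rw [sq, quat_mul_self]
  · exact absurd (neg_eq_iff_eq_neg.mp hq) hneg_one
  · rw [← neg_sq, ← hk, sq, quat_mul_self]

theorem trace_AMat_mul {q : Matrix (Fin 2) (Fin 2) ℂ} (hq : q ∈ quatBasis) :
    (AMat * q).trace = 1 + ω := by
  have hω := one_add_ω_add_ω_sq
  rcases hq with rfl | ⟨k, rfl⟩
  · simp [AMat, trace_fin_two]
  · simp only [AMat, quat, trace_fin_two, mul_apply, Fin.sum_univ_two, of_apply, cons_val_zero,
      cons_val_one, zero_mul, one_mul, add_zero, zero_add]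
    grind

theorem AMat_mul_pow_three {q : Matrix (Fin 2) (Fin 2) ℂ} (hq : q ∈ quatBasis) :
    (AMat * q) ^ 3 = 1 := by
  have hdet : (AMat * q).det = ω := by
    rw [det_mul, det_eq_one_of_mem_quatGroup (Or.inl hq)]
    simp [AMat]
  refine pow_three_eq_one_of_trace_eq_one_add_det ?_ ?_
  · rw [trace_AMat_mul hq, hdet]
  · rw [hdet, one_add_ω_add_ω_sq]

end QuaternionGroup

section G4

/-- The tautological representation of `G4`, bundling `mat` as a homomorphism. -/
def matHom : G4 →* Matrix (Fin 2) (Fin 2) ℂ := (Units.coeHom _).comp G4.subtype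

theorem mat_one : mat 1 = 1 := map_one matHom

theorem mat_mul (g h : G4) : mat (g * h) = mat g * mat h := map_mul matHom g h

theorem mat_pow (g : G4) (n : ℕ) : mat (g ^ n) = mat g ^ n := map_pow matHom g n

theorem mat_injective : Function.Injective mat :=
  Units.val_injective.comp Subtype.val_injective

theorem exists_eq_AMat_mul_of_generator {M : Matrix (Fin 2) (Fin 2) ℂ}
    (hM : M = AMat ∨ M = BMat) : ∃ q ∈ quatBasis, M = AMat * q := by
  rcases hM with rfl | rfl
  · exact ⟨1, Set.mem_insert _ _, (mul_one _).symm⟩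
  · exact ⟨quat 2, Set.mem_insert_of_mem _ ⟨2, rfl⟩, AMat_mul_quat_two.symm⟩

theorem exists_mat_eq_AMat_pow_mul (g : G4) :
    ∃ m : ℕ, ∃ q ∈ quatGroup, mat g = AMat ^ m * q := by
  obtain ⟨g, hg⟩ := g
  change ∃ m : ℕ, ∃ q ∈ quatGroup, (g : Matrix (Fin 2) (Fin 2) ℂ) = AMat ^ m * q
  unfold G4 at hg
  induction hg using Subgroup.closure_induction_right with
  | one => exact ⟨0, 1, one_mem _, by simp⟩
  | mul_right x _ y hy ih =>
    obtain ⟨r, hr, hyr⟩ := exists_eq_AMat_mul_of_generator hy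
    rw [Units.val_mul, hyr]
    exact exists_mul_AMat_mul_eq ih (Or.inl hr)
  | mul_inv_cancel x _ y hy ih =>
    obtain ⟨r, hr, hyr⟩ := exists_eq_AMat_mul_of_generator hy
    have hcube : y ^ 3 = 1 := Units.ext (by simp [hyr, AMat_mul_pow_three hr])
    have hinv : y⁻¹ = y * y := inv_eq_of_mul_eq_one_left (by rw [← hcube, pow_three'])
    rw [hinv, ← mul_assoc, Units.val_mul, Units.val_mul, hyr]
    exact exists_mul_AMat_mul_eq (exists_mul_AMat_mul_eq ih (Or.inl hr)) (Or.inl hr)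

theorem exists_mat_eq_AMat_pow_mul_of_det_eq {g : G4} {n : ℕ} (hg : (mat g).det = ω ^ n) :
    ∃ q ∈ quatGroup, mat g = AMat ^ n * q := by
  obtain ⟨m, q, hq, hmat⟩ := exists_mat_eq_AMat_pow_mul g
  have hdet : (mat g).det = ω ^ m := by
    rw [hmat, det_mul, det_eq_one_of_mem_quatGroup hq, mul_one, AMat_pow, det_fin_two_of]
    ring
  exact ⟨q, hq, by rw [hmat, AMat_pow, AMat_pow, ← hdet, hg]⟩

end G4

section Reflections

theorem det_mat_conj (g t : G4) : (mat (MulAut.conj g t)).det = (mat t).det :=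
  det_units_conj (g : GL (Fin 2) ℂ) (mat t)

theorem IsReflection.conj {t : G4} (ht : IsReflection t) (g : G4) :
    IsReflection (MulAut.conj g t) := by
  refine ⟨fun h => ht.1 ((MulAut.conj g).map_eq_one_iff.mp h), ?_⟩
  have hsub : mat (MulAut.conj g t) - 1 = mat g * (mat t - 1) * mat g⁻¹ := by
    rw [MulAut.conj_apply, mat_mul, mat_mul, mul_sub, sub_mul, mul_one, ← mat_mul g g⁻¹,
      mul_inv_cancel, mat_one]
  rw [hsub, det_mul, det_mul, ht.2, mul_zero, zero_mul]

theorem IsReflection.inv {t : G4} (ht : IsReflection t) : IsReflection t⁻¹ := by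
  refine ⟨inv_ne_one.mpr ht.1, ?_⟩
  have hsub : mat t⁻¹ - 1 = -(mat t⁻¹ * (mat t - 1)) := by
    rw [mul_sub, ← mat_mul, inv_mul_cancel, mat_one, mul_one, neg_sub]
  rw [hsub, det_neg, det_mul, ht.2, mul_zero, mul_zero]

theorem IsReflection.pow_three_eq_one {t : G4} (ht : IsReflection t)
    (hdet : 1 + (mat t).det + (mat t).det ^ 2 = 0) : t ^ 3 = 1 :=
  mat_injective <| by
    rw [mat_pow, mat_one,
      pow_three_eq_one_of_trace_eq_one_add_det
        (trace_eq_one_add_det_of_det_sub_one_eq_zero ht.2) hdet]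

theorem conj_mem_R1 {t : G4} (ht : t ∈ R1) (g : G4) : MulAut.conj g t ∈ R1 :=
  ⟨ht.1.conj g, (det_mat_conj g t).trans ht.2⟩

theorem conj_mem_R2 {t : G4} (ht : t ∈ R2) (g : G4) : MulAut.conj g t ∈ R2 :=
  ⟨ht.1.conj g, (det_mat_conj g t).trans ht.2⟩

theorem inv_mem_R1_of_mem_R2 {t : G4} (ht : t ∈ R2) : t⁻¹ ∈ R1 := by
  have hmul : ω ^ 2 * (mat t⁻¹).det = 1 := by
    rw [← ht.2, ← det_mul, ← mat_mul, mul_inv_cancel, mat_one, det_one]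
  refine ⟨ht.1.inv, ?_⟩
  linear_combination ω * hmul - (mat t⁻¹).det * ω_pow_three

theorem pow_three_eq_one_of_mem_R1 {t : G4} (ht : t ∈ R1) : t ^ 3 = 1 :=
  ht.1.pow_three_eq_one (by rw [ht.2, one_add_ω_add_ω_sq])

theorem sq_eq_inv_of_mem_R1 {t : G4} (ht : t ∈ R1) : t ^ 2 = t⁻¹ :=
  eq_inv_of_mul_eq_one_left (by rw [← pow_succ, pow_three_eq_one_of_mem_R1 ht])

theorem sq_eq_inv_of_mem_R2 {t : G4} (ht : t ∈ R2) : t ^ 2 = t⁻¹ := by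
  simpa using congrArg (·⁻¹) (sq_eq_inv_of_mem_R1 (inv_mem_R1_of_mem_R2 ht))

theorem trace_mat_of_mem_R1 {t : G4} (ht : t ∈ R1) : (mat t).trace = 1 + ω := by
  rw [trace_eq_one_add_det_of_det_sub_one_eq_zero ht.1.2, ht.2]

theorem one_add_ω_ne_neg : 1 + ω ≠ -(1 + ω) := by
  intro h
  have hω : ω = -1 := by linear_combination h / 2
  have := one_add_ω_add_ω_sq
  norm_num [hω] at this

theorem exists_mat_eq_AMat_mul_of_mem_R1 {t : G4} (ht : t ∈ R1) :
    ∃ q ∈ quatBasis, mat t = AMat * q := by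
  obtain ⟨q, hq, hmat⟩ := exists_mat_eq_AMat_pow_mul_of_det_eq (n := 1) (by rw [ht.2, pow_one])
  rw [pow_one] at hmat
  refine ⟨q, hq.resolve_right fun hneg => one_add_ω_ne_neg ?_, hmat⟩
  calc 1 + ω = (AMat * q).trace := by rw [← hmat, trace_mat_of_mem_R1 ht]
    _ = -(AMat * -q).trace := by rw [mul_neg, trace_neg, neg_neg]
    _ = -(1 + ω) := by rw [trace_AMat_mul hneg]

theorem encard_R1_le : R1.encard ≤ 4 := by
  have himage : mat '' R1 ⊆ (AMat * ·) '' quatBasis := by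
    rintro _ ⟨t, ht, rfl⟩
    obtain ⟨q, hq, hmat⟩ := exists_mat_eq_AMat_mul_of_mem_R1 ht
    exact ⟨q, hq, hmat.symm⟩
  calc R1.encard = (mat '' R1).encard := (mat_injective.encard_image R1).symm
    _ ≤ ((AMat * ·) '' quatBasis).encard := Set.encard_le_encard himage
    _ ≤ quatBasis.encard := Set.encard_image_le _ _
    _ ≤ 4 := encard_quatBasis_le

theorem mat_mul_sq_eq_neg_one {t₁ t₂ : G4} (h₁ : t₁ ∈ R1) (h₂ : t₂ ∈ R2) (hne : t₁ * t₂ ≠ 1) :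
    mat ((t₁ * t₂) ^ 2) = -1 := by
  have hdet : (mat (t₁ * t₂)).det = ω ^ 0 := by
    rw [mat_mul, det_mul, h₁.2, h₂.2, ← pow_succ', ω_pow_three, pow_zero]
  obtain ⟨q, hq, hmat⟩ := exists_mat_eq_AMat_pow_mul_of_det_eq hdet
  rw [pow_zero, one_mul] at hmat
  rw [mat_pow, hmat]
  refine sq_eq_neg_one_of_mem_quatGroup hq ?_ ?_
  · rintro rfl
    exact hne (mat_injective (hmat.trans mat_one.symm))
  · rintro rfl
    have hmat₁ : mat t₁ = -mat t₂⁻¹ := by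
      rw [← neg_one_mul, ← hmat, ← mat_mul, mul_inv_cancel_right]
    refine one_add_ω_ne_neg ?_
    calc 1 + ω = (mat t₁).trace := (trace_mat_of_mem_R1 h₁).symm
      _ = -(1 + ω) := by rw [hmat₁, trace_neg, trace_mat_of_mem_R1 (inv_mem_R1_of_mem_R2 h₂)]

theorem commute_sq_mul_of_mul_ne_one {t₁ t₂ : G4} (h₁ : t₁ ∈ R1) (h₂ : t₂ ∈ R2)
    (hne : t₁ * t₂ ≠ 1) (g : G4) : Commute ((t₁ * t₂) ^ 2) g :=
  mat_injective <| by
    rw [mat_mul, mat_mul, mat_mul_sq_eq_neg_one h₁ h₂ hne, neg_one_mul, mul_neg_one]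

theorem not_commute_of_mul_ne_one {t₁ t₂ : G4} (h₁ : t₁ ∈ R1) (h₂ : t₂ ∈ R2)
    (hne : t₁ * t₂ ≠ 1) : ¬Commute t₁ t₂ := by
  have hpow_four : (t₁ * t₂) ^ 4 = 1 := mat_injective <| by
    rw [pow_mul (t₁ * t₂) 2 2, mat_pow, mat_mul_sq_eq_neg_one h₁ h₂ hne, neg_one_sq, mat_one]
  have hcube : t₂ ^ 3 = 1 := by
    simpa using pow_three_eq_one_of_mem_R1 (inv_mem_R1_of_mem_R2 h₂)
  exact not_commute_of_pow_three_eq_one (pow_three_eq_one_of_mem_R1 h₁) hcube hpow_four hne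

theorem R1_eq_of_mul_ne_one {t₁ t₂ : G4} (h₁ : t₁ ∈ R1) (h₂ : t₂ ∈ R2) (hne : t₁ * t₂ ≠ 1) :
    R1 = {t₁, MulAut.conj (t₁ * t₂)⁻¹ t₁, t₂⁻¹, MulAut.conj (t₁ * t₂)⁻¹ t₂⁻¹} := by
  have hncomm := not_commute_of_mul_ne_one h₁ h₂ hne
  have hnodup := nodup_conj_pair (commute_sq_mul_of_mul_ne_one h₁ h₂ hne t₁) hncomm
    (mt Commute.inv_right_iff.mp hncomm) (Commute.refl t₂).inv_right
  have hfinite : R1.Finite := Set.finite_of_encard_le_coe encard_R1_le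
  refine (Set.eq_of_subset_of_ncard_le ?_ ?_ hfinite).symm
  · rintro _ (rfl | rfl | rfl | rfl)
    exacts [h₁, conj_mem_R1 h₁ _, inv_mem_R1_of_mem_R2 h₂, conj_mem_R1 (inv_mem_R1_of_mem_R2 h₂) _]
  · rw [ncard_eq_four_of_nodup hnodup]
    exact ENat.toNat_le_of_le_natCast encard_R1_le

end Reflections

theorem g4_diff_class_pair_orbit (t₁ t₂ : G4) (h₁ : t₁ ∈ R1) (h₂ : t₂ ∈ R2)
    (hne : t₂ ≠ t₁ ^ 2) :
    {s : Fin 2 → G4 | SameHurwitzOrbit ![t₁, t₂] s}.ncard = 4 ∧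
    ∃ t₁' t₂' : G4, t₁' ∈ R1 ∧ t₂' ∈ R2 ∧
      {r : G4 | Appears r ![t₁, t₂]} = {t₁, t₁', t₂, t₂'} ∧
      ({t₁, t₁', t₂, t₂'} : Set G4).ncard = 4 ∧
      R1 = {t₁, t₁', t₂ ^ 2, t₂' ^ 2} := by
  have hmul : t₁ * t₂ ≠ 1 := fun h =>
    hne ((sq_eq_inv_of_mem_R1 h₁).symm ▸ eq_inv_of_mul_eq_one_right h)
  have hcomm := commute_sq_mul_of_mul_ne_one h₁ h₂ hmul t₁
  have hncomm := not_commute_of_mul_ne_one h₁ h₂ hmul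
  have h₂' := conj_mem_R2 h₂ (t₁ * t₂)⁻¹
  refine ⟨ncard_setOf_sameHurwitzOrbit_pair hcomm hncomm, MulAut.conj (t₁ * t₂)⁻¹ t₁,
    MulAut.conj (t₁ * t₂)⁻¹ t₂, conj_mem_R1 h₁ _, h₂', setOf_appears_pair hcomm,
    ncard_eq_four_of_nodup (nodup_conj_pair hcomm hncomm hncomm (Commute.refl t₂)), ?_⟩
  rw [sq_eq_inv_of_mem_R2 h₂, sq_eq_inv_of_mem_R2 h₂', ← map_inv]
  exact R1_eq_of_mul_ne_one h₁ h₂ hmul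
end
end
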